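/- There exists a constant C > 0 such that for every integer R ≥ 2 the following holds: if α ∈ (0,1/2) is irrational and its regular continued fraction expansion (all partial quotients ≥ 2) is eventually periodic with period five, the partial quotients eventually cycling through R_**, R_*, R_*, R_*, R_*, then |ρ(α) − (1/4)(1 − 2/R_* − 2/R_*²)| ≤ C/R_*³. -/

import Mathlib

open Filter Finset

attribute [local instance] Classical.propDecidable

/-- Distance from `x` to the nearest integer, `‖x‖`. -/
noncomputable def nint (x : ℝ) : ℝ := |x - round x|

/-- The two-sided inhomogeneous approximation constant
`M(α,γ) = liminf_{|n|→∞} |n|·‖nα-γ‖`. -/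
noncomputable def Mval (α γ : ℝ) : ℝ :=
  Filter.liminf (fun n : ℤ => (|n| : ℝ) * nint (n * α - γ)) Filter.cofinite

/-- `ρ(α) = sup { M(α,γ) : γ ∉ ℤ + αℤ }`. -/
noncomputable def rho (α : ℝ) : ℝ :=
  sSup {m : ℝ | ∃ γ : ℝ, (¬∃ p q : ℤ, γ = (p : ℝ) + (q : ℝ) * α) ∧ m = Mval α γ}

/-- The tails `α_i` of the nearest integer continued fraction expansion of `α`. -/
noncomputable def nicfT (α : ℝ) : ℕ → ℝ
  | 0 => α
  | i + 1 =>
    if Int.fract (nicfT α i)⁻¹ ≤ 1 / 2 then Int.fract (nicfT α i)⁻¹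
    else 1 - Int.fract (nicfT α i)⁻¹

/-- The partial quotients `a_i` (meaningful for `i ≥ 1`) of the NICF expansion. -/
noncomputable def nicfA (α : ℝ) : ℕ → ℤ
  | 0 => 0
  | i + 1 => if Int.fract (nicfT α i)⁻¹ ≤ 1 / 2 then ⌊(nicfT α i)⁻¹⌋ else ⌈(nicfT α i)⁻¹⌉

/-- The signs `ε_i` of the NICF expansion (`ε_1 = 1`). -/
noncomputable def nicfE (α : ℝ) : ℕ → ℤ
  | 0 => 1
  | 1 => 1
  | i + 2 => if Int.fract (nicfT α i)⁻¹ ≤ 1 / 2 then 1 else -1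

/-- `nicfD α n = D_{n-1} = α_0 α_1 ⋯ α_{n-1}` (so `nicfD α 0 = 1`, `nicfD α 1 = α`). -/
noncomputable def nicfD (α : ℝ) (n : ℕ) : ℝ := ∏ j ∈ Finset.range n, nicfT α j

/-- The number of indices `1 ≤ k ≤ i` with `a_k` odd. -/
noncomputable def oddIdx (α : ℝ) (i : ℕ) : ℕ :=
  ((Finset.Icc 1 i).filter fun k => Odd (nicfA α k)).card

/-- `λ_i`: zero if `a_i` is even, `(-1)^j` if `a_i = a_{n_j}` is the `j`-th odd partial
quotient. -/
noncomputable def lamStar (α : ℝ) (i : ℕ) : ℤ :=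
  if Odd (nicfA α i) then (-1) ^ oddIdx α i else 0

/-- `γ_* = Σ_{i≥1} (a_i - 1 + ε_i + λ_i)/2 · D_{i-1}`. -/
noncomputable def gammaStar (α : ℝ) : ℝ :=
  ∑' k : ℕ,
    (((nicfA α (k + 1) : ℝ) - 1 + (nicfE α (k + 1) : ℝ) + (lamStar α (k + 1) : ℝ)) / 2) *
      nicfD α (k + 1)

/-- `λ'_i`: zero if `a_i` is even, one if `a_i` is odd. -/
noncomputable def lamStar2 (α : ℝ) (i : ℕ) : ℤ := if Odd (nicfA α i) then 1 else 0

/-- `γ_** = Σ_{i≥1} (a_i + λ'_i)/2 · D_{i-1}`. -/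
noncomputable def gammaStar2 (α : ℝ) : ℝ :=
  ∑' k : ℕ, (((nicfA α (k + 1) : ℝ) + (lamStar2 α (k + 1) : ℝ)) / 2) * nicfD α (k + 1)

/-- The denominators `q_i`: `q_0 = 1`, `q_1 = a_1`, `q_i = a_i q_{i-1} + ε_i q_{i-2}`. -/
noncomputable def qseq (α : ℝ) : ℕ → ℤ
  | 0 => 1
  | 1 => nicfA α 1
  | i + 2 => nicfA α (i + 2) * qseq α (i + 1) + nicfE α (i + 2) * qseq α i

/-- `ᾱ_i = q_{i-1}/q_i` (with `ᾱ_0 = 0`). -/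
noncomputable def abar (α : ℝ) (i : ℕ) : ℝ :=
  if i = 0 then 0 else (qseq α (i - 1) : ℝ) / (qseq α i : ℝ)

/-- `δ_i = -(-ε_1)(-ε_2)⋯(-ε_{i+1})`. -/
noncomputable def deltaSeq (α : ℝ) (i : ℕ) : ℤ := -∏ j ∈ Finset.Icc 1 (i + 1), (-nicfE α j)

/-- `d_n^- = (Σ_{i=1}^n t_i δ_{i-1} q_{i-1}) / (δ_{n-1} q_n)` for `γ_*` (so `t_i = λ_i`). -/
noncomputable def dminus (α : ℝ) (n : ℕ) : ℝ :=
  (∑ i ∈ Finset.Icc 1 n, (lamStar α i : ℝ) * (deltaSeq α (i - 1) : ℝ) * (qseq α (i - 1) : ℝ)) /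
    ((deltaSeq α (n - 1) : ℝ) * (qseq α n : ℝ))

/-- `d_n^+ = (Σ_{i=n+1}^∞ t_i D_{i-1}) / D_{n-1}` for `γ_*` (so `t_i = λ_i`). -/
noncomputable def dplus (α : ℝ) (n : ℕ) : ℝ :=
  (∑' k : ℕ, (lamStar α (n + 1 + k) : ℝ) * nicfD α (n + 1 + k)) / nicfD α n

/-- `d_n^-` for `γ_**` (so `t_i = λ'_i`). -/
noncomputable def dminus2 (α : ℝ) (n : ℕ) : ℝ :=
  (∑ i ∈ Finset.Icc 1 n, (lamStar2 α i : ℝ) * (deltaSeq α (i - 1) : ℝ) * (qseq α (i - 1) : ℝ)) /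
    ((deltaSeq α (n - 1) : ℝ) * (qseq α n : ℝ))

/-- `d_n^+` for `γ_**` (so `t_i = λ'_i`). -/
noncomputable def dplus2 (α : ℝ) (n : ℕ) : ℝ :=
  (∑' k : ℕ, (lamStar2 α (n + 1 + k) : ℝ) * nicfD α (n + 1 + k)) / nicfD α n

/-- `i ∈ S(γ_*)`: `|d_i^-| ≤ 1 - ᾱ_i` and `-(1-ε_{i+1}α_i) ≤ d_i^+ ≤ 1+ε_{i+1}α_i`. -/
def inS (α : ℝ) (i : ℕ) : Prop :=
  |dminus α i| ≤ 1 - abar α i ∧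
    -(1 - (nicfE α (i + 1) : ℝ) * nicfT α i) ≤ dplus α i ∧
      dplus α i ≤ 1 + (nicfE α (i + 1) : ℝ) * nicfT α i

/-- `i ∈ S(γ_**)`. -/
def inS2 (α : ℝ) (i : ℕ) : Prop :=
  |dminus2 α i| ≤ 1 - abar α i ∧
    -(1 - (nicfE α (i + 1) : ℝ) * nicfT α i) ≤ dplus2 α i ∧
      dplus2 α i ≤ 1 + (nicfE α (i + 1) : ℝ) * nicfT α i

/-- The remainders `γ_i` of the alpha-expansion of `γ`: `γ_0 = γ`,
`γ_{i+1} = {γ_i/α_i}`. -/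
noncomputable def gSeq (α γ : ℝ) : ℕ → ℝ
  | 0 => γ
  | i + 1 => Int.fract (gSeq α γ i / nicfT α i)

/-- The coefficients `c_i` (for `i ≥ 1`) of the alpha-expansion of `γ`:
`c_{i+1} = ⌊γ_i/α_i⌋`. -/
noncomputable def cCoef (α γ : ℝ) (i : ℕ) : ℤ := ⌊gSeq α γ (i - 1) / nicfT α (i - 1)⌋


/-- grid condition in a cell -/
def GoodCell (W al be x y : ℝ) : Prop :=
  ∀ m k : ℤ, Odd m → Odd k → |y + m * al - k| ≤ 4 →
    W * (1 + al * be) ≤ |x + m + k * be| * |y + m * al - k|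

lemma good_step {W al be al' be' x y : ℝ} {a t : ℤ} (hal : al * (a + al') = 1)
    (hbe : be' * (a + be) = 1) (h0 : 0 < al) (h1 : al ≤ 1) (hb : 0 < be')
    (ht : Even (t + a)) (h : GoodCell W al be x y) :
    GoodCell W al' be' (be' * (t - x)) (y / al - t) := by
  intro m k hm hk hY
  have e2 : y / al - t + m * al' - k
      = (y + ((-(t + m * a + k) : ℤ) : ℝ) * al - ((-m : ℤ) : ℝ)) / al := by
    have : al' = 1 / al - a := by field_simp; linarith
    rw [this]; push_cast; field_simp; ring
  have e1 : be' * (t - x) + m + k * be'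
      = -be' * (x + ((-(t + m * a + k) : ℤ) : ℝ) + ((-m : ℤ) : ℝ) * be) := by
    push_cast
    linear_combination (-(m:ℝ)) * hbe
  rw [e2] at hY ⊢
  rw [e1]
  have hodd : Odd (-(t + m * a + k)) := by
    rw [Int.odd_iff] at *
    rw [Int.even_iff] at ht
    have : (m * a) % 2 = a % 2 := by rw [Int.mul_emod, hm]; omega
    omega
  have := h (-(t + m * a + k)) (-m) hodd hm.neg (by
    rw [abs_div, abs_of_pos h0, div_le_iff₀ h0] at hY
    linarith [abs_nonneg (y + ((-(t + m * a + k) : ℤ) : ℝ) * al - ((-m : ℤ) : ℝ))])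
  rw [abs_mul, abs_neg, abs_of_pos hb, abs_div, abs_of_pos h0]
  set X := |x + ((-(t + m * a + k) : ℤ) : ℝ) + ((-m : ℤ) : ℝ) * be|
  set Y := |y + ((-(t + m * a + k) : ℤ) : ℝ) * al - ((-m : ℤ) : ℝ)|
  have e3 : W * (1 + al' * be') = (W * (1 + al * be)) * (be' / al) := by
    field_simp
    linear_combination W * be' * hal - W * al * hbe
  rw [e3]
  calc _ ≤ (X * Y) * (be' / al) := by gcongr
    _ = _ := by ring

lemma aux_amgm {u v e : ℝ} (hu : 0 ≤ u) (hv : 0 ≤ v) (h : u + v ≤ 6 * e) :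
    u * v ≤ 36 * e ^ 2 / 4 := by
  have h1 : u * v ≤ ((u + v) / 2) ^ 2 := by nlinarith [sq_nonneg (u - v)]
  have h2 : ((u + v) / 2) ^ 2 ≤ (6 * e / 2) ^ 2 := by gcongr
  linarith

set_option maxHeartbeats 1000000 in
lemma cellA {W al be x y e : ℝ} (he : 0 < e) (he1 : e ≤ 1 / 1000)
    (ha1 : e - 2 * e ^ 2 ≤ al) (ha2 : al ≤ e + 2 * e ^ 2)
    (hb1 : e - 2 * e ^ 2 ≤ be) (hb2 : be ≤ e + 2 * e ^ 2)
    (hW : 1 - 2.05 * e ≤ W) (hx : |x| ≤ 1.01) (hy : |y| ≤ 1.2)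
    (h : GoodCell W al be x y) : |x| + |y| ≤ 2.1 * e := by
  have he2 : e ^ 2 ≤ e / 1000 := by nlinarith
  have ha0 : 0 ≤ al := by nlinarith
  have hb0 : 0 ≤ be := by nlinarith
  have hal : al ≤ 0.0011 := by linarith
  have hbl : be ≤ 0.0011 := by linarith
  obtain ⟨hx1, hx2⟩ := abs_le.mp hx
  obtain ⟨hy1, hy2⟩ := abs_le.mp hy
  have hWW : 1 - 2.05 * e ≤ W * (1 + al * be) := by
    have : 0 ≤ W := by linarith
    nlinarith [mul_nonneg this (mul_nonneg ha0 hb0)]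
  have o1 : Odd (1 : ℤ) := by decide
  have o2 : Odd (-1 : ℤ) := by decide
  have v1 := h 1 (-1) o1 o2 (by rw [abs_le]; push_cast; constructor <;> linarith)
  have v2 := h (-1) 1 o2 o1 (by rw [abs_le]; push_cast; constructor <;> linarith)
  have v3 := h 1 1 o1 o1 (by rw [abs_le]; push_cast; constructor <;> linarith)
  have v4 := h (-1) (-1) o2 o2 (by rw [abs_le]; push_cast; constructor <;> linarith)
  push_cast at v1 v2 v3 v4
  have key : ∀ u v : ℝ, |u| ≤ 0.45 → |v| ≤ 1.3 → W * (1 + al * be) ≤ |u| * |v| → False := by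
    intro u v hu hv hh
    have : |u| * |v| ≤ 0.45 * 1.3 := by gcongr
    linarith
  have key' : ∀ u v : ℝ, |u| ≤ 1.3 → |v| ≤ 0.45 → W * (1 + al * be) ≤ |u| * |v| → False := by
    intro u v hu hv hh
    exact key v u hv hu (by linarith [mul_comm |u| |v|])
  have bx1 : x < 0.6 := by
    by_contra hc
    push Not at hc
    rcases le_total 0 y with h0 | h0
    · exact key _ _ (by rw [abs_le]; constructor <;> linarith)
        (by rw [abs_le]; constructor <;> linarith) v2
    · exact key _ _ (by rw [abs_le]; constructor <;> linarith)
        (by rw [abs_le]; constructor <;> linarith) v4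
  have bx2 : -0.6 < x := by
    by_contra hc
    push Not at hc
    rcases le_total 0 y with h0 | h0
    · exact key _ _ (by rw [abs_le]; constructor <;> linarith)
        (by rw [abs_le]; constructor <;> linarith) v3
    · exact key _ _ (by rw [abs_le]; constructor <;> linarith)
        (by rw [abs_le]; constructor <;> linarith) v1
  have by1 : y < 0.6 := by
    by_contra hc
    push Not at hc
    rcases le_total 0 x with h0 | h0
    · exact key' _ _ (by rw [abs_le]; constructor <;> linarith)
        (by rw [abs_le]; constructor <;> linarith) v2
    · exact key' _ _ (by rw [abs_le]; constructor <;> linarith)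
        (by rw [abs_le]; constructor <;> linarith) v3
  have by2 : -0.6 < y := by
    by_contra hc
    push Not at hc
    rcases le_total 0 x with h0 | h0
    · exact key' _ _ (by rw [abs_le]; constructor <;> linarith)
        (by rw [abs_le]; constructor <;> linarith) v4
    · exact key' _ _ (by rw [abs_le]; constructor <;> linarith)
        (by rw [abs_le]; constructor <;> linarith) v1
  rw [← abs_mul, abs_of_pos (mul_pos (by linarith) (by linarith))] at v1
  rw [← abs_mul, abs_of_pos (mul_pos_of_neg_of_neg (by linarith) (by linarith))] at v2
  rw [← abs_mul, abs_of_neg (mul_neg_of_pos_of_neg (by linarith) (by linarith))] at v3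
  rw [← abs_mul, abs_of_neg (mul_neg_of_neg_of_pos (by linarith) (by linarith))] at v4
  have hab : 0 ≤ al * be := by positivity
  have hab2 : al * be ≤ 0.0011 * (1.002 * e) := by
    apply mul_le_mul <;> linarith
  have s1 : -(2.1 * e) ≤ x * y := by linarith
  have s2 : x * y ≤ 2.1 * e := by linarith
  have bnd : ∀ c : ℝ, (|x| ≤ c) → (|y| ≤ c) → |al * x| ≤ 1.002 * e * c ∧ |be * y| ≤ 1.002 * e * c := by
    intro c h1 h2
    rw [abs_mul, abs_mul, abs_of_nonneg ha0, abs_of_nonneg hb0]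
    constructor <;> apply mul_le_mul <;> first | linarith | positivity
  have fin : ∀ p q : ℝ, |x * y| ≤ p → |al * x| ≤ q → |be * y| ≤ q →
      |x| + |y| ≤ 2.056 * e + p + 2 * q := by
    intro p q h1 h2 h3
    rw [abs_le] at h1 h2 h3
    rcases abs_cases x with ⟨h, _⟩ | ⟨h, _⟩ <;> rcases abs_cases y with ⟨h', _⟩ | ⟨h', _⟩ <;>
      rw [h, h'] <;> linarith
  have b1 := bnd 0.6 (abs_le.mpr ⟨by linarith, by linarith⟩) (abs_le.mpr ⟨by linarith, by linarith⟩)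
  have f1 := fin _ _ (abs_le.mpr ⟨s1, s2⟩) b1.1 b1.2
  have hx6 : |x| ≤ 6 * e := by linarith [abs_nonneg y]
  have hy6 : |y| ≤ 6 * e := by linarith [abs_nonneg x]
  have b2 := bnd (6 * e) hx6 hy6
  have hxy : |x * y| ≤ 36 * e ^ 2 / 4 := by
    rw [abs_mul]
    exact aux_amgm (abs_nonneg x) (abs_nonneg y) (by linarith)
  have f2 := fin _ _ hxy b2.1 b2.2
  linarith

set_option maxHeartbeats 1000000 in
lemma cellF {W al be x y e : ℝ} (he : 0 < e) (he1 : e ≤ 1 / 1000)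
    (ha1 : e - 2 * e ^ 3 ≤ al) (ha2 : al ≤ e)
    (hb1 : e - 2 * e ^ 3 ≤ be) (hb2 : be ≤ e)
    (hx2 : |x| ≤ e + 3 * e ^ 2)
    (hy2 : |y| ≤ e + 3 * e ^ 2)
    (hxy : 2 * e + e ^ 2 - 50 * e ^ 3 ≤ |x| + |y|)
    (h : GoodCell W al be x y) : W ≤ 1 - 2 * e - 2 * e ^ 2 + 100 * e ^ 3 := by
  have he2 : e ^ 2 ≤ e / 1000 := by nlinarith
  have he3 : e ^ 3 ≤ e ^ 2 / 1000 := by nlinarith [sq_nonneg e]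
  have he30 : 0 < e ^ 3 := by positivity
  have ha0 : 0 ≤ al := by nlinarith
  have hb0 : 0 ≤ be := by nlinarith
  have o1 : Odd (1 : ℤ) := by decide
  have o2 : Odd (-1 : ℤ) := by decide
  have hx3 := abs_le.mp hx2
  have hy3 := abs_le.mp hy2
  have v1 := h 1 (-1) o1 o2 (by rw [abs_le]; push_cast; constructor <;> linarith)
  have v2 := h (-1) 1 o2 o1 (by rw [abs_le]; push_cast; constructor <;> linarith)
  have v3 := h 1 1 o1 o1 (by rw [abs_le]; push_cast; constructor <;> linarith)
  have v4 := h (-1) (-1) o2 o2 (by rw [abs_le]; push_cast; constructor <;> linarith)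
  push_cast at v1 v2 v3 v4
  rw [← abs_mul, abs_of_pos (mul_pos (by linarith) (by linarith))] at v1
  rw [← abs_mul, abs_of_pos (mul_pos_of_neg_of_neg (by linarith) (by linarith))] at v2
  rw [← abs_mul, abs_of_neg (mul_neg_of_pos_of_neg (by linarith) (by linarith))] at v3
  rw [← abs_mul, abs_of_neg (mul_neg_of_neg_of_pos (by linarith) (by linarith))] at v4
  have hq : W * (1 + al * be) ≤ 1 - 2 * e - e ^ 2 + 70 * e ^ 3 := by
    have p1 : (be + |x|) * (|y| - al) ≤ (3 * e) * (4 * e ^ 2) := by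
      calc _ ≤ (be + |x|) * (4 * e ^ 2) := by
            apply mul_le_mul_of_nonneg_left _ (by positivity); nlinarith
        _ ≤ _ := by apply mul_le_mul_of_nonneg_right _ (by positivity); linarith
    have p2 : (al + |y|) * (|x| - be) ≤ (3 * e) * (4 * e ^ 2) := by
      calc _ ≤ (al + |y|) * (4 * e ^ 2) := by
            apply mul_le_mul_of_nonneg_left _ (by positivity); nlinarith
        _ ≤ _ := by apply mul_le_mul_of_nonneg_right _ (by positivity); linarith
    rcases abs_cases x with ⟨h, _⟩ | ⟨h, _⟩ <;> rcases abs_cases y with ⟨h', _⟩ | ⟨h', _⟩ <;>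
      rw [h, h'] at hxy p1 p2 <;> linarith
  have e4 : e ^ 4 ≤ e ^ 3 / 1000 := by nlinarith
  have hab : e ^ 2 - 4 * e ^ 4 ≤ al * be := by
    calc _ ≤ (e - 2 * e ^ 3) * (e - 2 * e ^ 3) := by nlinarith [sq_nonneg (e ^ 3)]
      _ ≤ _ := by apply mul_le_mul <;> linarith
  by_contra hc
  push Not at hc
  have hpos : 0 ≤ 1 - 2 * e - 2 * e ^ 2 + 100 * e ^ 3 := by linarith
  have : (1 - 2 * e - 2 * e ^ 2 + 100 * e ^ 3) * (1 + (e ^ 2 - 4 * e ^ 4)) ≤ W * (1 + al * be) := by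
    apply mul_le_mul <;> linarith
  have e5 : 0 ≤ e ^ 5 := by positivity
  have e6 : e ^ 7 ≤ e ^ 4 := pow_le_pow_of_le_one he.le (by linarith) (by norm_num)
  have e8 : 0 ≤ e ^ 6 := by positivity
  nlinarith


/-- abstract continued fraction data -/
structure CFData (a : ℕ → ℤ) (al be : ℕ → ℝ) : Prop where
  al_pos : ∀ n, 0 < al n
  al_le : ∀ n, al n ≤ 1 / 2
  be_nonneg : ∀ n, 0 ≤ be n
  be_le : ∀ n, be n ≤ 1 / 2
  be_pos : ∀ n, 0 < be (n + 1)
  hal : ∀ n, al n * (a (n + 1) + al (n + 1)) = 1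
  hbe : ∀ n, be (n + 1) * (a (n + 1) + be n) = 1

/-- periodicity data (bounds and parities) -/
structure PerData (a : ℕ → ℤ) (al be : ℕ → ℝ) (e : ℝ) : Prop where
  a1 : ∀ n, e - 2 * e ^ 2 ≤ al n
  a2 : ∀ n, al n ≤ e + 2 * e ^ 2
  b1 : ∀ n, e - 2 * e ^ 2 ≤ be n
  b2 : ∀ n, be n ≤ e + 2 * e ^ 2
  c : ∀ k j, 1 ≤ j → j ≤ 3 → e - 2 * e ^ 3 ≤ al (5 * k + j) ∧ al (5 * k + j) ≤ e ∧
    e - 2 * e ^ 3 ≤ be (5 * k + j) ∧ be (5 * k + j) ≤ e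
  par0 : ∀ k, Even (a (5 * k))
  par : ∀ k j, 1 ≤ j → j ≤ 4 → Odd (a (5 * k + j))

lemma stepOdd {a : ℕ → ℤ} {al be : ℕ → ℝ} {e W x y : ℝ} (cf : CFData a al be)
    (p : PerData a al be e) (he : 0 < e) (he1 : e ≤ 1 / 1000) (hW : 1 - 2.05 * e ≤ W) (n : ℕ)
    (hodd : Odd (a (n + 1))) (hs : |x| + |y| ≤ 2.1 * e) (h : GoodCell W (al n) (be n) x y) :
    ∃ t x' y' : ℝ, (t = 1 ∨ t = -1) ∧ x' = be (n + 1) * (t - x) ∧ y = al n * (t + y') ∧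
      |x'| + |y'| ≤ 2.1 * e ∧ 0.99 * e ≤ |x'| ∧ GoodCell W (al (n + 1)) (be (n + 1)) x' y' := by
  have a1 := p.a1 n
  have a2 := p.a2 n
  have b1 := p.b1 (n + 1)
  have b2 := p.b2 (n + 1)
  have he2 : e ^ 2 ≤ e / 1000 := by nlinarith
  have apos := cf.al_pos n
  have hx : |x| ≤ 2.1 * e := by linarith [abs_nonneg y]
  have hy : |y| ≤ 2.1 * e := by linarith [abs_nonneg x]
  have hy' : |y / al n| ≤ 2.15 := by
    rw [abs_div, abs_of_pos apos, div_le_iff₀ apos]; linarith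
  obtain ⟨t, ht, hty⟩ : ∃ t : ℤ, (t = 1 ∨ t = -1) ∧ |y / al n - t| ≤ 1.2 := by
    rw [abs_le] at hy'
    rcases le_total 0 (y / al n) with h0 | h0
    · refine ⟨1, Or.inl rfl, ?_⟩
      rw [abs_le]; push_cast; constructor <;> linarith
    · refine ⟨-1, Or.inr rfl, ?_⟩
      rw [abs_le]; push_cast; constructor <;> linarith
  have hev : Even (t + a (n + 1)) := by
    rcases ht with rfl | rfl
    · exact Odd.add_odd (by decide) hodd
    · exact Odd.add_odd (by decide) hodd
  have g := good_step (cf.hal n) (cf.hbe n) apos (by linarith [cf.al_le n]) (cf.be_pos n) hev h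
  have htx : 1 - 2.1 * e ≤ |(t : ℝ) - x| ∧ |(t : ℝ) - x| ≤ 1 + 2.1 * e := by
    rw [abs_le] at hx
    rcases ht with rfl | rfl
    · rw [abs_of_pos (by push_cast; linarith)]; push_cast; constructor <;> linarith
    · rw [abs_of_neg (by push_cast; linarith)]; push_cast; constructor <;> linarith
  have hxa : |be (n + 1) * (t - x)| = be (n + 1) * |t - x| := by
    rw [abs_mul, abs_of_pos (cf.be_pos n)]
  have hx1 : |be (n + 1) * (t - x)| ≤ 1.01 := by
    rw [hxa]
    calc _ ≤ (0.5 : ℝ) * 2 := by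
          apply mul_le_mul <;> first | linarith | positivity
      _ ≤ _ := by norm_num
  have hx2 : 0.99 * e ≤ |be (n + 1) * (t - x)| := by
    rw [hxa]
    calc _ ≤ (0.995 * e) * (0.997) := by linarith
      _ ≤ _ := by
          apply mul_le_mul <;> first | linarith | positivity
  have hs' := cellA he he1 (p.a1 _) (p.a2 _) (p.b1 _) (p.b2 _) hW hx1 hty g
  refine ⟨t, _, _, ?_, rfl, ?_, hs', hx2, g⟩
  · rcases ht with rfl | rfl <;> simp
  · field_simp; ring

lemma stepEven {a : ℕ → ℤ} {al be : ℕ → ℝ} {e W x y : ℝ} (cf : CFData a al be)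
    (p : PerData a al be e) (he : 0 < e) (he1 : e ≤ 1 / 1000) (hW : 1 - 2.05 * e ≤ W) (n : ℕ)
    (hev : Even (a (n + 1))) (hs : |x| + |y| ≤ 2.1 * e) (hx0 : 0.99 * e ≤ |x|)
    (h : GoodCell W (al n) (be n) x y) :
    ∃ x' y' : ℝ, |x'| ≤ 2.2 * e ^ 2 ∧ |y| ≤ 2.2 * e ^ 2 ∧
      |x'| + |y'| ≤ 2.1 * e ∧ GoodCell W (al (n + 1)) (be (n + 1)) x' y' := by
  have a1 := p.a1 n
  have a2 := p.a2 n
  have b1 := p.b1 (n + 1)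
  have b2 := p.b2 (n + 1)
  have he2 : e ^ 2 ≤ e / 1000 := by nlinarith
  have apos := cf.al_pos n
  have hx : |x| ≤ 2.1 * e := by linarith [abs_nonneg y]
  have hy : |y| ≤ 1.11 * e := by linarith [abs_nonneg x]
  have hy' : |y / al n - (0 : ℤ)| ≤ 1.2 := by
    rw [Int.cast_zero, sub_zero, abs_div, abs_of_pos apos, div_le_iff₀ apos]; linarith
  have g := good_step (t := 0) (cf.hal n) (cf.hbe n) apos (by linarith [cf.al_le n])
    (cf.be_pos n) (by simpa using hev) h
  have hxa : |be (n + 1) * ((0 : ℤ) - x)| ≤ 2.2 * e ^ 2 := by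
    rw [abs_mul, abs_of_pos (cf.be_pos n), Int.cast_zero, zero_sub, abs_neg]
    calc _ ≤ (1.01 * e) * (2.1 * e) := by
          apply mul_le_mul <;> first | linarith | positivity
      _ ≤ _ := by nlinarith
  have hs' := cellA he he1 (p.a1 _) (p.a2 _) (p.b1 _) (p.b2 _) hW (by linarith) hy' g
  refine ⟨_, _, hxa, ?_, hs', g⟩
  have e1 : y = al n * (y / al n - (0 : ℤ)) := by push_cast; field_simp; ring
  have e3 : |y / al n - (0 : ℤ)| ≤ 2.1 * e :=
    le_trans (le_add_of_nonneg_left (abs_nonneg _)) hs'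
  rw [e1, abs_mul, abs_of_pos apos]
  calc _ ≤ (1.01 * e) * (2.1 * e) := by
        apply mul_le_mul _ e3 (abs_nonneg _) (by positivity)
        linarith
    _ ≤ _ := by nlinarith

lemma arithG1 {c z t e : ℝ} (he : 0 < e) (he1 : e ≤ 1 / 1000) (h1 : e - 2 * e ^ 3 ≤ c)
    (h2 : c ≤ e) (hz : |z| ≤ 2.2 * e ^ 2) (ht : t = 1 ∨ t = -1) :
    e - 5 * e ^ 3 ≤ |c * (t + z)| ∧ |c * (t + z)| ≤ e + 3 * e ^ 2 := by
  have he2 : e ^ 2 ≤ e / 1000 := by nlinarith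
  have he3 : e ^ 3 ≤ e ^ 2 / 1000 := by nlinarith [sq_nonneg e]
  have c0 : 0 ≤ c := by linarith
  have h : 1 - 2.2 * e ^ 2 ≤ |t + z| ∧ |t + z| ≤ 1 + 2.2 * e ^ 2 := by
    rw [abs_le] at hz
    rcases ht with rfl | rfl
    · rw [abs_of_pos (by linarith)]; constructor <;> linarith
    · rw [abs_of_neg (by linarith)]; constructor <;> linarith
  rw [abs_mul, abs_of_nonneg c0]
  constructor
  · calc _ ≤ (e - 2 * e ^ 3) * (1 - 2.2 * e ^ 2) := by
          have : 0 ≤ e ^ 5 := by positivity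
          have : 0 ≤ e ^ 3 := by positivity
          linarith
      _ ≤ _ := by apply mul_le_mul <;> linarith [h.1]
  · calc _ ≤ e * (1 + 2.2 * e ^ 2) := by
          apply mul_le_mul <;> first | linarith [h.2] | positivity
      _ ≤ _ := by linarith

lemma arithG2 {c d z t e : ℝ} (he : 0 < e) (he1 : e ≤ 1 / 1000) (h1 : e - 2 * e ^ 3 ≤ c)
    (h2 : c ≤ e) (h3 : e - 2 * e ^ 3 ≤ d) (h4 : d ≤ e) (hz : |z| ≤ 2.1 * e)
    (ht : t = 1 ∨ t = -1) :
    e + e ^ 2 - 10 * e ^ 3 ≤ |c * (t + d * (t + z))| ∧ |c * (t + d * (t + z))| ≤ e + 3 * e ^ 2 := by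
  have he2 : e ^ 2 ≤ e / 1000 := by nlinarith
  have he3 : e ^ 3 ≤ e ^ 2 / 1000 := by nlinarith [sq_nonneg e]
  have he4 : e ^ 4 ≤ e ^ 3 / 1000 := by nlinarith [sq_nonneg e, pow_pos he 3]
  have p3 : 0 < e ^ 3 := by positivity
  have p4 : 0 < e ^ 4 := by positivity
  have p5 : 0 < e ^ 5 := by positivity
  have p6 : 0 < e ^ 6 := by positivity
  have c0 : 0 ≤ c := by linarith
  have d0 : 0 ≤ d := by linarith
  -- reduce to t = 1
  obtain ⟨w, hw, hw1, hw2⟩ : ∃ w : ℝ, |c * (t + d * (t + z))| = c * (1 + d * w) ∧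
      1 - 2.1 * e ≤ w ∧ w ≤ 1 + 2.1 * e := by
    rw [abs_le] at hz
    rcases ht with rfl | rfl
    · refine ⟨1 + z, ?_, by linarith, by linarith⟩
      have : 0 ≤ 1 + z := by linarith
      rw [abs_of_nonneg]
      positivity
    · refine ⟨1 - z, ?_, by linarith, by linarith⟩
      have : 0 ≤ 1 - z := by linarith
      rw [← abs_neg, abs_of_nonneg]
      · ring
      · have : 0 ≤ c * (1 + d * (1 - z)) := by positivity
        linarith
  rw [hw]
  have d1 : (e - 2 * e ^ 3) * (1 - 2.1 * e) ≤ d * w := by apply mul_le_mul <;> linarith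
  have d2 : d * w ≤ e * (1 + 2.1 * e) := by apply mul_le_mul <;> linarith
  constructor
  · calc _ ≤ (e - 2 * e ^ 3) * (1 + (e - 2.2 * e ^ 2)) := by nlinarith
      _ ≤ _ := by apply mul_le_mul <;> linarith
  · calc _ ≤ e * (1 + e * (1 + 2.1 * e)) := by
          apply mul_le_mul <;> first | linarith | positivity
      _ ≤ _ := by linarith

theorem upper_abs {a : ℕ → ℤ} {al be : ℕ → ℝ} {e W x y : ℝ} (cf : CFData a al be)
    (p : PerData a al be e) (he : 0 < e) (he1 : e ≤ 1 / 1000)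
    (hx : |x| ≤ 1.01) (hy : |y| ≤ 1.2) (h : GoodCell W (al 3) (be 3) x y) :
    W ≤ 1 - 2 * e - 2 * e ^ 2 + 100 * e ^ 3 := by
  by_contra hc
  push Not at hc
  have he2 : e ^ 2 ≤ e / 1000 := by nlinarith
  have he3 : e ^ 3 ≤ e ^ 2 / 1000 := by nlinarith [sq_nonneg e]
  have p3 : 0 < e ^ 3 := by positivity
  have hW : 1 - 2.05 * e ≤ W := by linarith
  have hs3 := cellA he he1 (p.a1 _) (p.a2 _) (p.b1 _) (p.b2 _) hW hx hy h
  obtain ⟨s4, x4, y4, -, -, -, hs4, hx4, g4⟩ :=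
    stepOdd cf p he he1 hW 3 (p.par 0 4 (by norm_num) (by norm_num)) hs3 h
  obtain ⟨x5, y5, hx5, -, hs5, g5⟩ := stepEven cf p he he1 hW 4 (p.par0 1) hs4 hx4 g4
  obtain ⟨t1, x6, y6, ht1, ex6, ey5, hs6, hx6, g6⟩ :=
    stepOdd cf p he he1 hW 5 (p.par 1 1 (by norm_num) (by norm_num)) hs5 g5
  obtain ⟨t2, x7, y7, ht2, ex7, ey6, hs7, hx7, g7⟩ :=
    stepOdd cf p he he1 hW 6 (p.par 1 2 (by norm_num) (by norm_num)) hs6 g6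
  obtain ⟨t3, x8, y8, ht3, ex8, ey7, hs8, hx8, g8⟩ :=
    stepOdd cf p he he1 hW 7 (p.par 1 3 (by norm_num) (by norm_num)) hs7 g7
  obtain ⟨t4, x9, y9, ht4, ex9, ey8, hs9, hx9, g9⟩ :=
    stepOdd cf p he he1 hW 8 (p.par 1 4 (by norm_num) (by norm_num)) hs8 g8
  obtain ⟨x10, y10, -, hy9, hs10, g10⟩ := stepEven cf p he he1 hW 9 (p.par0 2) hs9 hx9 g9
  obtain ⟨A1, A2, A3, A4⟩ := p.c 1 1 (by norm_num) (by norm_num)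
  obtain ⟨B1, B2, B3, B4⟩ := p.c 1 2 (by norm_num) (by norm_num)
  obtain ⟨C1, C2, C3, C4⟩ := p.c 1 3 (by norm_num) (by norm_num)
  norm_num only at *
  by_cases h23 : t2 = t3
  · have k1 := arithG1 (z := -x5) (t := t1) he he1 A3 A4 (by rw [abs_neg]; linarith) ht1
    have k2 := arithG2 (z := y8) (t := t2) he he1 A1 A2 B1 B2
      (by linarith [abs_nonneg x8]) ht2
    have e1 : x6 = be 6 * (t1 + -x5) := by rw [ex6]; ring
    have e2 : y6 = al 6 * (t2 + al 7 * (t2 + y8)) := by rw [ey6, ey7, h23]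
    rw [← e1] at k1
    rw [← e2] at k2
    have := cellF he he1 A1 A2 A3 A4 k1.2 k2.2 (by linarith [k1.1, k2.1]) g6
    linarith
  · have h23' : t2 = -t3 := by
      rcases ht2 with rfl | rfl <;> rcases ht3 with rfl | rfl <;> simp at h23 ⊢
    have k1 := arithG1 (z := y9) (t := t4) he he1 C1 C2 (by linarith) ht4
    have k2 := arithG2 (z := x6) (t := t3) he he1 C3 C4 B3 B4
      (by linarith [abs_nonneg y6]) ht3
    have e2 : x8 = be 8 * (t3 + be 7 * (t3 + x6)) := by rw [ex8, ex7, h23']; ring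
    rw [← ey8] at k1
    rw [← e2] at k2
    have := cellF he he1 C1 C2 C3 C4 k2.2 k1.2 (by linarith [k1.1, k2.1]) g8
    linarith


/-- vertices of the cell satisfy the lower bound -/
def VertOK (W al be x y : ℝ) : Prop :=
  ∀ m k : ℤ, (m = 1 ∨ m = -1) → (k = 1 ∨ k = -1) →
    W * (1 + al * be) ≤ |x + m + k * be| * |y + m * al - k|

lemma vertOK_of {W al be x y e : ℝ} (he : 0 < e) (he1 : e ≤ 1 / 1000)
    (ha0 : 0 ≤ al) (ha2 : al ≤ 1.1 * e) (hb0 : 0 ≤ be) (hb2 : be ≤ 1.1 * e)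
    (hx : |x| ≤ 2 * e) (hy : |y| ≤ 2 * e)
    (h1 : W * (1 + al * be) ≤ (1 - be + x) * (1 + al + y))
    (h2 : W * (1 + al * be) ≤ (1 - be - x) * (1 + al - y))
    (h3 : W * (1 + al * be) ≤ (1 + be + x) * (1 - al - y))
    (h4 : W * (1 + al * be) ≤ (1 + be - x) * (1 - al + y)) : VertOK W al be x y := by
  rw [abs_le] at hx hy
  rintro m k (rfl | rfl) (rfl | rfl)
  all_goals push_cast
  · rw [← abs_mul, abs_of_neg (mul_neg_of_pos_of_neg (by linarith) (by linarith))]; linarith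
  · rw [← abs_mul, abs_of_pos (mul_pos (by linarith) (by linarith))]; linarith
  · rw [← abs_mul, abs_of_pos (mul_pos_of_neg_of_neg (by linarith) (by linarith))]; linarith
  · rw [← abs_mul, abs_of_neg (mul_neg_of_neg_of_pos (by linarith) (by linarith))]; linarith

lemma vert0 {W al be x y e : ℝ} (he : 0 < e) (he1 : e ≤ 1 / 1000)
    (ha1 : e - 2 * e ^ 2 ≤ al) (ha2 : al ≤ e + 2 * e ^ 2)
    (hb1 : e - 2 * e ^ 2 ≤ be) (hb2 : be ≤ e + 2 * e ^ 2)
    (hW : W ≤ 1 - 2 * e) (hW0 : 0 ≤ W) (hx : |x| ≤ 1.1 * e) (hy : |y| ≤ 1.1 * e)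
    (hs : |x| + |y| ≤ 1.1 * e) : VertOK W al be x y := by
  have he2 : e ^ 2 ≤ e / 1000 := by nlinarith
  have ha0 : 0 ≤ al := by linarith
  have hb0 : 0 ≤ be := by linarith
  have prod : ∀ u v : ℝ, |u| ≤ 1.1 * e → |v| ≤ 1.1 * e → |u * v| ≤ 0.0013 * e := by
    intro u v hu hv
    rw [abs_mul]
    calc _ ≤ (1.1 * e) * (1.1 * e) := by apply mul_le_mul <;> first | linarith | positivity
      _ ≤ _ := by linarith
  have hal : |al| ≤ 1.1 * e := by rw [abs_of_nonneg ha0]; linarith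
  have hbe : |be| ≤ 1.1 * e := by rw [abs_of_nonneg hb0]; linarith
  have p1 := abs_le.mp (prod al be hal hbe)
  have p2 := abs_le.mp (prod al x hal hx)
  have p3 := abs_le.mp (prod be y hbe hy)
  have p4 := abs_le.mp (prod x y hx hy)
  have hw : W * (1 + al * be) ≤ 1 - 1.9 * e := by
    calc _ ≤ (1 - 2 * e) * (1 + 0.0013 * e) := by
          apply mul_le_mul <;> linarith [mul_nonneg ha0 hb0]
      _ ≤ _ := by linarith [sq_nonneg e]
  apply vertOK_of he he1 ha0 (by linarith) hb0 (by linarith) (by linarith) (by linarith)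
  all_goals
    rcases abs_cases x with ⟨h, _⟩ | ⟨h, _⟩ <;> rcases abs_cases y with ⟨h', _⟩ | ⟨h', _⟩ <;>
      rw [h, h'] at hs <;> linarith

set_option maxHeartbeats 1000000 in
lemma vert1 {W al be x y e : ℝ} (he : 0 < e) (he1 : e ≤ 1 / 1000)
    (ha1 : e - 2 * e ^ 3 ≤ al) (ha2 : al ≤ e)
    (hb1 : e - 2 * e ^ 3 ≤ be) (hb2 : be ≤ e)
    (hW : W ≤ 1 - 2 * e - 2 * e ^ 2 - 50 * e ^ 3) (hW0 : 0 ≤ W)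
    (hx0 : 0 ≤ x) (hx : x ≤ e + 5 * e ^ 3) (hy0 : 0 ≤ y) (hy : y ≤ e + e ^ 2 + 5 * e ^ 3) :
    VertOK W al be x y := by
  have he2 : e ^ 2 ≤ e / 1000 := by nlinarith
  have he3 : e ^ 3 ≤ e ^ 2 / 1000 := by nlinarith [sq_nonneg e]
  have q3 : 0 < e ^ 3 := by positivity
  have q2 : 0 < e ^ 2 := by positivity
  have q4 : 0 < e ^ 4 := by positivity
  have q5 : 0 < e ^ 5 := by positivity
  have q6 : 0 < e ^ 6 := by positivity
  have he4 : e ^ 4 ≤ e ^ 3 / 1000 := by nlinarith [sq_nonneg e, pow_pos he 3]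
  have he5 : e ^ 5 ≤ e ^ 4 / 1000 := by nlinarith [sq_nonneg e, pow_pos he 4]
  have he6 : e ^ 6 ≤ e ^ 5 / 1000 := by nlinarith [sq_nonneg e, pow_pos he 5]
  have ha0 : 0 ≤ al := by linarith
  have hb0 : 0 ≤ be := by linarith
  have hab : al * be ≤ e ^ 2 := by
    calc _ ≤ e * e := by apply mul_le_mul <;> linarith
      _ = _ := by ring
  have hab0 : 0 ≤ al * be := by positivity
  have hw : W * (1 + al * be) ≤ 1 - 2 * e - e ^ 2 - 50 * e ^ 3 := by
    calc _ ≤ (1 - 2 * e - 2 * e ^ 2 - 50 * e ^ 3) * (1 + e ^ 2) := by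
          apply mul_le_mul <;> linarith
      _ ≤ _ := by linarith
  apply vertOK_of he he1 ha0 (by linarith) hb0 (by linarith)
    (by rw [abs_of_nonneg hx0]; linarith) (by rw [abs_of_nonneg hy0]; linarith)
  · refine hw.trans ?_
    calc _ ≤ (1 - e) * 1 := by linarith
      _ ≤ _ := by apply mul_le_mul <;> linarith
  · refine hw.trans ?_
    calc _ ≤ (1 - 2 * e - 5 * e ^ 3) * (1 - e ^ 2 - 7 * e ^ 3) := by linarith
      _ ≤ _ := by apply mul_le_mul <;> linarith
  · refine hw.trans ?_
    calc _ ≤ (1 : ℝ) * (1 - 2 * e - e ^ 2 - 5 * e ^ 3) := by linarith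
      _ ≤ _ := by apply mul_le_mul <;> linarith
  · refine hw.trans ?_
    calc _ ≤ (1 - 7 * e ^ 3) * (1 - e) := by linarith
      _ ≤ _ := by apply mul_le_mul <;> linarith

lemma odd_abs_ge {m : ℤ} (hm : Odd m) (h : ¬ (m = 1 ∨ m = -1)) : (3 : ℝ) ≤ |(m : ℝ)| := by
  have : (3 : ℤ) ≤ |m| := by
    obtain ⟨j, rfl⟩ := hm
    rcases abs_cases (2 * j + 1) with ⟨h1, _⟩ | ⟨h1, _⟩ <;> rw [h1] <;> omega
  exact_mod_cast this

set_option maxHeartbeats 1000000 in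
lemma coreCell {W al be x y e : ℝ} (he : 0 < e) (he1 : e ≤ 1 / 1000)
    (ha1 : e - 2 * e ^ 2 ≤ al) (ha2 : al ≤ e + 2 * e ^ 2)
    (hb1 : e - 2 * e ^ 2 ≤ be) (hb2 : be ≤ e + 2 * e ^ 2)
    (hW : W ≤ 1 - 2 * e) (hW0 : 0 ≤ W) (hx : |x| ≤ 2 * e) (hy : |y| ≤ 2 * e)
    (hv : VertOK W al be x y) (m k : ℤ) (hm : Odd m) (hk : Odd k)
    (h1 : 2 * be < |x + m + k * be|) (h2 : |x + m + k * be| ≤ 2) :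
    W * (1 + al * be) ≤ |x + m + k * be| * |y + m * al - k| := by
  have he2 : e ^ 2 ≤ e / 1000 := by nlinarith
  have ha0 : 0 ≤ al := by linarith
  have hb0 : 0 ≤ be := by linarith
  have hw : W * (1 + al * be) ≤ 1 := by
    have : al * be ≤ 0.0011 * (1.1 * e) := by apply mul_le_mul <;> linarith
    calc _ ≤ (1 - 2 * e) * (1 + 0.0011 * (1.1 * e)) := by
          apply mul_le_mul <;> linarith [mul_nonneg ha0 hb0]
      _ ≤ _ := by linarith [sq_nonneg e]
  by_cases hbig : 1 ≤ 2 * be * |y + m * al - k|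
  · calc _ ≤ 1 := hw
      _ ≤ _ := hbig
      _ ≤ _ := by gcongr
  push Not at hbig
  set Y := |y + m * al - k| with hY
  have hY0 : 0 ≤ Y := abs_nonneg _
  -- e * Y ≤ 0.51
  have heY : e * Y ≤ 0.51 := by
    have : (0.998 * e) * Y ≤ be * Y := by gcongr; linarith
    linarith
  have hkle : |(k : ℝ)| ≤ Y + 2 * e + 1.002 * e * |(m : ℝ)| := by
    have e1 : (k : ℝ) = y + m * al - (y + m * al - k) := by ring
    have e2 : |(k : ℝ)| ≤ |y + m * al| + |y + m * al - k| := by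
      conv_lhs => rw [e1]
      exact abs_sub _ _
    have e3 : |y + m * al| ≤ |y| + |m * al| := abs_add_le _ _
    have e4 : |(m : ℝ) * al| ≤ 1.002 * e * |(m : ℝ)| := by
      rw [abs_mul, abs_of_nonneg ha0, mul_comm]
      gcongr
      linarith
    linarith
  have hmle : |(m : ℝ)| ≤ 2 + 2 * e + 1.002 * e * |(k : ℝ)| := by
    have e1 : (m : ℝ) = (x + m + k * be) - (x + k * be) := by ring
    have e2 : |(m : ℝ)| ≤ |x + m + k * be| + |x + k * be| := by
      conv_lhs => rw [e1]
      exact abs_sub _ _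
    have e3 : |x + k * be| ≤ |x| + |k * be| := abs_add_le _ _
    have e4 : |(k : ℝ) * be| ≤ 1.002 * e * |(k : ℝ)| := by
      rw [abs_mul, abs_of_nonneg hb0, mul_comm]
      gcongr
      linarith
    linarith
  have hmk : 1.002 * e * |(k : ℝ)| ≤ 0.52 + 0.0011 * |(m : ℝ)| := by
    have : e * |(k : ℝ)| ≤ e * (Y + 2 * e + 1.002 * e * |(m : ℝ)|) := by gcongr
    have t2 : e ^ 2 * |(m : ℝ)| ≤ 0.000001 * |(m : ℝ)| := by
      gcongr; linarith
    have t3 : e * (Y + 2 * e + 1.002 * e * |(m : ℝ)|)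
      = e * Y + 2 * e ^ 2 + 1.002 * (e ^ 2 * |(m : ℝ)|) := by ring
    linarith [abs_nonneg (m : ℝ)]
  have hm1 : m = 1 ∨ m = -1 := by
    by_contra hc
    have := odd_abs_ge hm hc
    linarith
  by_cases hk1 : k = 1 ∨ k = -1
  · exact hv m k hm1 hk1
  have hk3 := odd_abs_ge hk hk1
  have hmabs : |(m : ℝ)| = 1 := by rcases hm1 with rfl | rfl <;> simp
  have hX : 1 - 2 * e - be * |(k : ℝ)| ≤ |x + m + k * be| := by
    have e1 : (m : ℝ) = (x + m + k * be) - (x + k * be) := by ring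
    have e2 : |(m : ℝ)| ≤ |x + m + k * be| + |x + k * be| := by
      conv_lhs => rw [e1]
      exact abs_sub _ _
    have e3 : |x + k * be| ≤ |x| + |k * be| := abs_add_le _ _
    have e4 : |(k : ℝ) * be| = be * |(k : ℝ)| := by
      rw [abs_mul, abs_of_nonneg hb0, mul_comm]
    linarith
  rw [hmabs] at hkle hmk
  have hbk : be * |(k : ℝ)| ≤ 0.53 := by
    have : be * |(k : ℝ)| ≤ (1.002 * e) * |(k : ℝ)| := by gcongr; linarith
    linarith
  have hYk : 2.9 ≤ Y := by linarith
  calc _ ≤ 1 := hw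
    _ ≤ 0.4 * 2.9 := by norm_num
    _ ≤ _ := by apply mul_le_mul <;> linarith


/-- the digits -/
noncomputable def tdig (a : ℕ → ℤ) (n : ℕ) : ℤ := by
  classical exact if Even (a n) then 0 else 1

lemma tdig_even {a : ℕ → ℤ} {n : ℕ} (h : Even (a n)) : tdig a n = 0 := by
  simp [tdig, h]

lemma tdig_odd {a : ℕ → ℤ} {n : ℕ} (h : Odd (a n)) : tdig a n = 1 := by
  have : ¬ Even (a n) := by simpa using h
  simp [tdig, this]

lemma tdig_cases (a : ℕ → ℤ) (n : ℕ) : tdig a n = 0 ∨ tdig a n = 1 := by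
  rcases Int.even_or_odd (a n) with h | h
  · exact Or.inl (tdig_even h)
  · exact Or.inr (tdig_odd h)

lemma tdig_par (a : ℕ → ℤ) (n : ℕ) : Even (tdig a n + a n) := by
  rcases Int.even_or_odd (a n) with h | h
  · rw [tdig_even h]; simpa using h
  · rw [tdig_odd h]; exact Odd.add_odd (by decide) h

lemma exists_y {al s : ℕ → ℝ} (h0 : ∀ n, 0 < al n) (h1 : ∀ n, al n ≤ 1 / 2)
    (s0 : ∀ n, 0 ≤ s n) (s1 : ∀ n, s n ≤ 1) :
    ∃ y : ℕ → ℝ, (∀ n, y n = al n * (s (n + 1) + y (n + 1))) ∧ (∀ n, 0 ≤ y n) ∧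
      ∀ n, y n ≤ 1 := by
  let f : ℕ → ℕ → ℝ := fun n k => s (n + 1 + k) * ∏ j ∈ Finset.range (k + 1), al (n + j)
  have f0 : ∀ n k, 0 ≤ f n k := fun n k =>
    mul_nonneg (s0 _) (Finset.prod_nonneg fun j _ => (h0 _).le)
  have f1 : ∀ n k, f n k ≤ (1 / 2) / 2 ^ k := by
    intro n k
    have : ∏ j ∈ Finset.range (k + 1), al (n + j) ≤ ∏ j ∈ Finset.range (k + 1), (1 / 2 : ℝ) :=
      Finset.prod_le_prod (fun j _ => (h0 _).le) (fun j _ => h1 _)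
    rw [Finset.prod_const, Finset.card_range] at this
    calc f n k ≤ 1 * (1 / 2) ^ (k + 1) := by
          apply mul_le_mul (s1 _) this (Finset.prod_nonneg fun j _ => (h0 _).le) zero_le_one
      _ = _ := by rw [pow_succ, one_div_pow]; field_simp
  have hg : HasSum (fun k : ℕ => (1 / 2 : ℝ) / 2 ^ k) 1 := by
    simpa using hasSum_geometric_two' (1 : ℝ)
  have fs : ∀ n, Summable (f n) := fun n => Summable.of_nonneg_of_le (f0 n) (f1 n) hg.summable
  refine ⟨fun n => ∑' k, f n k, ?_, fun n => tsum_nonneg (f0 n), ?_⟩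
  · intro n
    show ∑' k, f n k = al n * (s (n + 1) + ∑' k, f (n + 1) k)
    rw [(fs n).tsum_eq_zero_add, mul_add, ← tsum_mul_left]
    congr 1
    · simp [f, mul_comm]
    · apply tsum_congr
      intro k
      simp only [f]
      rw [Finset.prod_range_succ' (fun j => al (n + j))]
      rw [show n + 1 + (k + 1) = n + 1 + 1 + k by ring]
      have : ∀ j, al (n + (j + 1)) = al (n + 1 + j) := fun j => by congr 1; ring
      simp only [this, add_zero]
      ring
  · intro n
    exact ((fs n).tsum_le_tsum (f1 n) hg.summable).trans hg.tsum_eq.le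

lemma upbd {c w B : ℝ} (hc : 0 ≤ c) (hc' : c ≤ B) (hw0 : 0 ≤ w) {D : ℝ} (hw : w ≤ D) (hB : 0 ≤ B) :
    0 ≤ c * w ∧ c * w ≤ B * D := ⟨by positivity, mul_le_mul hc' hw hw0 hB⟩

theorem y_bounds {a : ℕ → ℤ} {al be : ℕ → ℝ} {e : ℝ} (cf : CFData a al be)
    (p : PerData a al be e) (he : 0 < e) (he1 : e ≤ 1 / 1000) {y : ℕ → ℝ}
    (hy : ∀ n, y n = al n * ((tdig a (n + 1) : ℝ) + y (n + 1))) (y0 : ∀ n, 0 ≤ y n)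
    (y1 : ∀ n, y n ≤ 1) :
    (∀ n, y n ≤ 1.01 * e) ∧ (∀ k j, 1 ≤ j → j ≤ 3 → y (5 * k + j) ≤ e + e ^ 2 + 5 * e ^ 3) ∧
      (∀ k, y (5 * k + 4) ≤ 1.1 * e ^ 2) := by
  have he2 : e ^ 2 ≤ e / 1000 := by nlinarith
  have he3 : e ^ 3 ≤ e ^ 2 / 1000 := by nlinarith [sq_nonneg e]
  have q3 : 0 < e ^ 3 := by positivity
  have q4 : 0 < e ^ 4 := by positivity
  have he4 : e ^ 4 ≤ e ^ 3 / 1000 := by nlinarith [sq_nonneg e, pow_pos he 3]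
  have t1 : ∀ n, (tdig a n : ℝ) ≤ 1 := by
    intro n; rcases tdig_cases a n with h | h <;> rw [h] <;> simp
  have t0 : ∀ n, 0 ≤ (tdig a n : ℝ) := by
    intro n; rcases tdig_cases a n with h | h <;> rw [h] <;> simp
  have b1 : ∀ n, y n ≤ 2.1 * e := by
    intro n
    rw [hy]
    calc _ ≤ (1.01 * e) * 2 := by
          apply mul_le_mul _ (by linarith [t1 (n + 1), y1 (n + 1)])
            (add_nonneg (t0 _) (y0 _)) (by positivity)
          linarith [p.a2 n]
      _ ≤ _ := by linarith
  have b2 : ∀ n, y n ≤ 1.01 * e := by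
    intro n
    rw [hy]
    calc _ ≤ (1.002 * e) * (1 + 2.1 * e) := by
          apply mul_le_mul _ (by linarith [t1 (n + 1), b1 (n + 1)])
            (add_nonneg (t0 _) (y0 _)) (by positivity)
          linarith [p.a2 n]
      _ ≤ _ := by linarith
  have b4 : ∀ k, y (5 * k + 4) ≤ 1.1 * e ^ 2 := by
    intro k
    rw [hy, show 5 * k + 4 + 1 = 5 * (k + 1) by ring, tdig_even (p.par0 (k + 1))]
    push_cast
    calc _ ≤ (1.002 * e) * (1.01 * e) := by
          apply mul_le_mul _ (by linarith [b2 (5 * (k + 1))])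
            (by linarith [y0 (5 * (k + 1))]) (by positivity)
          linarith [p.a2 (5 * k + 4)]
      _ ≤ _ := by nlinarith
  have stepc : ∀ k j, 1 ≤ j → j ≤ 3 → y (5 * k + j) ≤ e * (1 + y (5 * k + j + 1)) := by
    intro k j h1 h2
    rw [hy (5 * k + j)]
    obtain ⟨A1, A2, A3, A4⟩ := p.c k j h1 h2
    apply mul_le_mul A2 _ (add_nonneg (t0 _) (y0 _)) he.le
    linarith [t1 (5 * k + j + 1)]
  refine ⟨b2, ?_, b4⟩
  intro k j h1 h2
  have s3 := stepc k 3 (by norm_num) (by norm_num)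
  have s2 := stepc k 2 (by norm_num) (by norm_num)
  have s1 := stepc k 1 (by norm_num) (by norm_num)
  simp only [add_assoc, Nat.reduceAdd] at s1 s2 s3
  have r3 : y (5 * k + 3) ≤ e + 1.1 * e ^ 3 := by
    have := mul_le_mul_of_nonneg_left (b4 k) he.le
    linarith
  have r2 : y (5 * k + 2) ≤ e + e ^ 2 + 1.1 * e ^ 4 := by
    have := mul_le_mul_of_nonneg_left r3 he.le
    linarith
  have r1 : y (5 * k + 1) ≤ e + e ^ 2 + 2 * e ^ 3 := by
    have r2' : y (5 * k + 2) ≤ e + 1.5 * e ^ 2 := by linarith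
    have := mul_le_mul_of_nonneg_left r2' he.le
    linarith
  interval_cases j <;> linarith

theorem x_bounds {a : ℕ → ℤ} {al be : ℕ → ℝ} {e : ℝ} (cf : CFData a al be)
    (p : PerData a al be e) (he : 0 < e) (he1 : e ≤ 1 / 1000) {x : ℕ → ℝ}
    (hx : ∀ n, x (n + 1) = be (n + 1) * ((tdig a (n + 1) : ℝ) - x n))
    (x0 : -(3 * e ^ 2) ≤ x 0) (x0' : x 0 ≤ 0) (k : ℕ) :
    (-(3 * e ^ 2) ≤ x (5 * k) ∧ x (5 * k) ≤ 0) ∧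
    (∀ j, 1 ≤ j → j ≤ 3 → 0 ≤ x (5 * k + j) ∧ x (5 * k + j) ≤ e + 5 * e ^ 3) ∧
    (0 ≤ x (5 * k + 4) ∧ x (5 * k + 4) ≤ e + 2 * e ^ 2) := by
  have he2 : e ^ 2 ≤ e / 1000 := by nlinarith
  have he3 : e ^ 3 ≤ e ^ 2 / 1000 := by nlinarith [sq_nonneg e]
  have q3 : 0 < e ^ 3 := by positivity
  have hodd : ∀ k j, 1 ≤ j + 1 → j + 1 ≤ 4 →
      x (5 * k + (j + 1)) = be (5 * k + (j + 1)) * (1 - x (5 * k + j)) := by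
    intro k j h1 h2
    rw [← add_assoc, hx, add_assoc, tdig_odd (p.par k (j + 1) h1 h2)]
    simp
  have blk : ∀ k, (-(3 * e ^ 2) ≤ x (5 * k) ∧ x (5 * k) ≤ 0) →
      (∀ j, 1 ≤ j → j ≤ 3 → 0 ≤ x (5 * k + j) ∧ x (5 * k + j) ≤ e + 5 * e ^ 3) ∧
      (0 ≤ x (5 * k + 4) ∧ x (5 * k + 4) ≤ e + 2 * e ^ 2) := by
    intro k ⟨u1, u2⟩
    have e1 := hodd k 0 (by norm_num) (by norm_num)
    have e2 := hodd k 1 (by norm_num) (by norm_num)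
    have e3 := hodd k 2 (by norm_num) (by norm_num)
    have e4 := hodd k 3 (by norm_num) (by norm_num)
    simp only [Nat.reduceAdd, zero_add, add_zero] at e1 e2 e3 e4
    obtain ⟨-, -, A3, A4⟩ := p.c k 1 (by norm_num) (by norm_num)
    obtain ⟨-, -, B3, B4⟩ := p.c k 2 (by norm_num) (by norm_num)
    obtain ⟨-, -, C3, C4⟩ := p.c k 3 (by norm_num) (by norm_num)
    have r1 := upbd (cf.be_nonneg _) A4 (w := 1 - x (5 * k)) (by linarith)
      (D := 1 + 3 * e ^ 2) (by linarith) he.le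
    rw [← e1] at r1
    have r1' : x (5 * k + 1) ≤ 2 * e := by linarith
    have r2 := upbd (cf.be_nonneg _) B4 (w := 1 - x (5 * k + 1)) (by linarith)
      (D := 1) (by linarith) he.le
    rw [← e2] at r2
    have r3 := upbd (cf.be_nonneg _) C4 (w := 1 - x (5 * k + 2)) (by linarith)
      (D := 1) (by linarith) he.le
    rw [← e3] at r3
    have r4 := upbd (cf.be_nonneg _) (p.b2 (5 * k + 4)) (w := 1 - x (5 * k + 3))
      (by linarith) (D := 1) (by linarith) (by positivity)
    rw [← e4] at r4
    refine ⟨?_, r4.1, by linarith [r4.2]⟩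
    intro j h1 h2
    interval_cases j
    · exact ⟨r1.1, by linarith [r1.2]⟩
    · exact ⟨r2.1, by linarith [r2.2]⟩
    · exact ⟨r3.1, by linarith [r3.2]⟩
  have main : -(3 * e ^ 2) ≤ x (5 * k) ∧ x (5 * k) ≤ 0 := by
    induction k with
    | zero => exact ⟨x0, x0'⟩
    | succ k ih =>
      have h4 := (blk k ih).2
      have e5 : x (5 * (k + 1)) = be (5 * (k + 1)) * (0 - x (5 * k + 4)) := by
        have := hx (5 * k + 4)
        rw [show 5 * k + 4 + 1 = 5 * (k + 1) by ring, tdig_even (p.par0 (k + 1))] at this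
        simpa using this
      have r5 := upbd (cf.be_nonneg (5 * (k + 1))) (p.b2 (5 * (k + 1)))
        (w := x (5 * k + 4)) h4.1 h4.2 (by positivity)
      rw [e5]
      constructor
      · have : (e + 2 * e ^ 2) * (e + 2 * e ^ 2) ≤ 3 * e ^ 2 := by
          calc _ ≤ (1.01 * e) * (1.01 * e) := by apply mul_le_mul <;> linarith
            _ ≤ _ := by nlinarith
        linarith [r5.2]
      · linarith [r5.1]
  exact ⟨main, blk k main⟩

theorem cell_facts {a : ℕ → ℤ} {al be : ℕ → ℝ} {e W : ℝ} (cf : CFData a al be)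
    (p : PerData a al be e) (he : 0 < e) (he1 : e ≤ 1 / 1000)
    (hW : W ≤ 1 - 2 * e - 2 * e ^ 2 - 50 * e ^ 3) (hW0 : 0 ≤ W) {x y : ℕ → ℝ}
    (hy : ∀ n, y n = al n * ((tdig a (n + 1) : ℝ) + y (n + 1))) (y0 : ∀ n, 0 ≤ y n)
    (y1 : ∀ n, y n ≤ 1)
    (hx : ∀ n, x (n + 1) = be (n + 1) * ((tdig a (n + 1) : ℝ) - x n))
    (x0 : -(3 * e ^ 2) ≤ x 0) (x0' : x 0 ≤ 0) (n : ℕ) :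
    |x n| ≤ 2 * e ∧ |y n| ≤ 2 * e ∧ VertOK W (al n) (be n) (x n) (y n) := by
  have he2 : e ^ 2 ≤ e / 1000 := by nlinarith
  have he3 : e ^ 3 ≤ e ^ 2 / 1000 := by nlinarith [sq_nonneg e]
  have q3 : 0 < e ^ 3 := by positivity
  obtain ⟨k, j, hj, rfl⟩ : ∃ k j, j < 5 ∧ n = 5 * k + j :=
    ⟨n / 5, n % 5, Nat.mod_lt _ (by norm_num), by omega⟩
  obtain ⟨Y1, Y2, Y3⟩ := y_bounds cf p he he1 hy y0 y1
  obtain ⟨X1, X2, X3⟩ := x_bounds cf p he he1 hx x0 x0' k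
  have yy : |y (5 * k + j)| = y (5 * k + j) := abs_of_nonneg (y0 _)
  have yb := Y1 (5 * k + j)
  by_cases h0 : j = 0
  · subst h0
    have hxa : |x (5 * k + 0)| ≤ 3 * e ^ 2 := by
      rw [abs_le]; exact ⟨X1.1, X1.2.trans (by positivity)⟩
    refine ⟨by linarith, by linarith, ?_⟩
    exact vert0 he he1 (p.a1 _) (p.a2 _) (p.b1 _) (p.b2 _) (by linarith) hW0 (by linarith)
      (by linarith) (by linarith)
  by_cases h4 : j = 4
  · subst h4
    have hxa : |x (5 * k + 4)| = x (5 * k + 4) := abs_of_nonneg X3.1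
    have := Y3 k
    refine ⟨by linarith, by linarith, ?_⟩
    exact vert0 he he1 (p.a1 _) (p.a2 _) (p.b1 _) (p.b2 _) (by linarith) hW0 (by linarith)
      (by linarith) (by linarith)
  have j1 : 1 ≤ j := by omega
  have j3 : j ≤ 3 := by omega
  obtain ⟨A1, A2, A3, A4⟩ := p.c k j j1 j3
  have xx := X2 j j1 j3
  have hxa : |x (5 * k + j)| = x (5 * k + j) := abs_of_nonneg xx.1
  refine ⟨by linarith, by linarith, ?_⟩
  exact vert1 he he1 A1 A2 A3 A4 hW hW0 xx.1 xx.2 (y0 _) (Y2 k j j1 j3)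

/-- change of coordinates of a grid point between consecutive levels -/
lemma coord_step {al be al' be' x y y' : ℝ} {a t : ℤ} (hal : al * (a + al') = 1)
    (hbe : be' * (a + be) = 1) (h0 : 0 < al) (hb : 0 < be')
    (ht : Even (t + a)) (hy : y = al * (t + y')) {m k : ℤ} (hm : Odd m) (hk : Odd k) :
    ∃ m' k' : ℤ, Odd m' ∧ Odd k' ∧
      |be' * (t - x) + m' + k' * be'| = be' * |x + m + k * be| ∧
      al * |y' + m' * al' - k'| = |y + m * al - k| := by
  refine ⟨-k, -m - t + k * a, hk.neg, ?_, ?_, ?_⟩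
  · rw [Int.odd_iff] at *
    rw [Int.even_iff] at ht
    have : (k * a) % 2 = a % 2 := by rw [Int.mul_emod, hk]; omega
    omega
  · rw [← abs_of_pos hb, ← abs_mul, abs_of_pos hb, ← abs_neg]
    congr 1
    push_cast
    linear_combination (-(k : ℝ)) * hbe
  · have e0 : |al| = al := abs_of_pos h0
    conv_lhs => rw [← e0]
    rw [← abs_mul]
    congr 1
    push_cast
    rw [hy]
    linear_combination (-(k : ℝ)) * hal

theorem lower_abs {a : ℕ → ℤ} {al be : ℕ → ℝ} {e W : ℝ} (cf : CFData a al be)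
    (p : PerData a al be e) (he : 0 < e) (he1 : e ≤ 1 / 1000)
    (hW : W ≤ 1 - 2 * e - 2 * e ^ 2 - 50 * e ^ 3) (hW0 : 0 < W) :
    ∃ y0 : ℝ, ∀ x0 : ℝ, -(3 * e ^ 2) ≤ x0 → x0 ≤ 0 → ∀ m k : ℤ, Odd m → Odd k →
      (2 < |x0 + m + k * be 0| →
        W * (1 + al 0 * be 0) ≤ |x0 + m + k * be 0| * |y0 + m * al 0 - k|) ∧
      y0 + m * al 0 - k ≠ 0 := by
  have t1 : ∀ n, (tdig a n : ℝ) ≤ 1 := by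
    intro n; rcases tdig_cases a n with h | h <;> rw [h] <;> simp
  have t0 : ∀ n, 0 ≤ (tdig a n : ℝ) := by
    intro n; rcases tdig_cases a n with h | h <;> rw [h] <;> simp
  obtain ⟨y, hy, y0, y1⟩ := exists_y cf.al_pos cf.al_le t0 t1
  refine ⟨y 0, ?_⟩
  intro x0 hx0 hx0'
  obtain ⟨x, hxz, hx⟩ : ∃ x : ℕ → ℝ, x 0 = x0 ∧
      ∀ n, x (n + 1) = be (n + 1) * ((tdig a (n + 1) : ℝ) - x n) :=
    ⟨fun n => Nat.rec x0 (fun n xn => be (n + 1) * ((tdig a (n + 1) : ℝ) - xn)) n,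
      rfl, fun n => rfl⟩
  subst hxz
  have cells := fun n => cell_facts cf p he he1 hW hW0.le hy y0 y1 hx hx0 hx0' n
  have he2 : e ^ 2 ≤ e / 1000 := by nlinarith
  have q3 : 0 < e ^ 3 := by positivity
  have hW' : W ≤ 1 - 2 * e := by linarith [sq_nonneg e]
  have core : ∀ n (m k : ℤ), Odd m → Odd k → 2 * be n < |x n + m + k * be n| →
      |x n + m + k * be n| ≤ 2 →
      W * (1 + al n * be n) ≤ |x n + m + k * be n| * |y n + m * al n - k| := by
    intro n m k hm hk h1 h2
    obtain ⟨c1, c2, c3⟩ := cells n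
    exact coreCell he he1 (p.a1 n) (p.a2 n) (p.b1 n) (p.b2 n) hW' hW0.le c1 c2 c3 m k hm hk h1 h2
  have climb : ∀ (j : ℕ) n (m k : ℤ), Odd m → Odd k → 2 < |x n + m + k * be n| →
      |x n + m + k * be n| ≤ 2 * 2 ^ j →
      W * (1 + al n * be n) ≤ |x n + m + k * be n| * |y n + m * al n - k| := by
    intro j
    induction j with
    | zero => intro n m k _ _ h1 h2; norm_num at h2; linarith
    | succ j ih =>
      intro n m k hm hk h1 h2
      obtain ⟨m', k', hm', hk', eX, eY⟩ := coord_step (x := x n) (cf.hal n) (cf.hbe n)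
        (cf.al_pos n) (cf.be_pos n) (tdig_par a (n + 1)) (hy n) hm hk
      rw [← hx] at eX
      have hb := cf.be_pos n
      have ha := cf.al_pos n
      have hbl := cf.be_le (n + 1)
      have l1 : 2 * be (n + 1) < |x (n + 1) + m' + k' * be (n + 1)| := by
        rw [eX, mul_comm]; gcongr
      have l2 : |x (n + 1) + m' + k' * be (n + 1)| ≤ 2 * 2 ^ j := by
        rw [eX]
        calc _ ≤ (1 / 2 : ℝ) * (2 * 2 ^ (j + 1)) := by gcongr
          _ = _ := by rw [pow_succ]; ring
      have nxt : W * (1 + al (n + 1) * be (n + 1)) ≤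
          |x (n + 1) + m' + k' * be (n + 1)| * |y (n + 1) + m' * al (n + 1) - k'| := by
        rcases le_or_gt |x (n + 1) + m' + k' * be (n + 1)| 2 with h | h
        · exact core _ _ _ hm' hk' l1 h
        · exact ih _ _ _ hm' hk' h l2
      have e3 : W * (1 + al n * be n) =
          (W * (1 + al (n + 1) * be (n + 1))) * (al n / be (n + 1)) := by
        field_simp
        linear_combination al n * cf.hbe n - be (n + 1) * cf.hal n
      rw [e3, ← eY]
      calc _ ≤ (|x (n + 1) + m' + k' * be (n + 1)| * |y (n + 1) + m' * al (n + 1) - k'|) *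
            (al n / be (n + 1)) := by gcongr
        _ = _ := by rw [eX]; field_simp
  have climb' : ∀ n (m k : ℤ), Odd m → Odd k → 2 < |x n + m + k * be n| →
      W * (1 + al n * be n) ≤ |x n + m + k * be n| * |y n + m * al n - k| := by
    intro n m k hm hk h
    obtain ⟨j, hj⟩ := pow_unbounded_of_one_lt |x n + m + k * be n| (one_lt_two : (1 : ℝ) < 2)
    exact climb j n m k hm hk h (by linarith [abs_nonneg (x n + m + k * be n)])
  intro m k hm hk
  refine ⟨fun h => climb' 0 m k hm hk h, ?_⟩
  intro hz
  have ab0 : 0 ≤ al 0 * be 0 := mul_nonneg (cf.al_pos 0).le (cf.be_nonneg 0)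
  rcases le_or_gt |x 0 + m + k * be 0| 2 with h | h
  · obtain ⟨m', k', hm', hk', eX, eY⟩ := coord_step (x := x 0) (cf.hal 0) (cf.hbe 0)
      (cf.al_pos 0) (cf.be_pos 0) (tdig_par a (0 + 1)) (hy 0) hm hk
    rw [← hx] at eX
    rw [hz, abs_zero] at eY
    have z : y (0 + 1) + m' * al (0 + 1) - k' = 0 := by
      rcases mul_eq_zero.mp eY with h' | h'
      · exact absurd h' (cf.al_pos 0).ne'
      · exact abs_eq_zero.mp h'
    obtain ⟨c1, c2, -⟩ := cells (0 + 1)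
    have hb := cf.be_pos 0
    have hbs : be (0 + 1) ≤ 1.01 * e := by linarith [p.b2 (0 + 1)]
    have s1 : |x (0 + 1) + m' + k' * be (0 + 1)| ≤ 0.01 := by
      rw [eX]
      calc _ ≤ be (0 + 1) * 2 := by gcongr
        _ ≤ _ := by linarith
    have s2 : (m' : ℝ) * (1 + al (0 + 1) * be (0 + 1)) =
        (x (0 + 1) + m' + k' * be (0 + 1)) - x (0 + 1) - y (0 + 1) * be (0 + 1) := by
      linear_combination (be (0 + 1)) * z
    have s3 : |(m' : ℝ) * (1 + al (0 + 1) * be (0 + 1))| ≤ 0.1 := by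
      rw [s2]
      have : |y (0 + 1) * be (0 + 1)| ≤ 0.01 * 1 := by
        rw [abs_mul, abs_of_pos hb]
        apply mul_le_mul <;> linarith [cf.be_le (0 + 1)]
      have c1' := abs_le.mp c1
      have s1' := abs_le.mp s1
      have this' := abs_le.mp this
      rw [abs_le]
      constructor <;> linarith [c1'.1, c1'.2, s1'.1, s1'.2, this'.1, this'.2]
    have s4 : (1 : ℝ) ≤ |(m' : ℝ)| := by
      have : (1 : ℤ) ≤ |m'| := Int.one_le_abs (by rintro rfl; simp at hm')
      exact_mod_cast this
    have s5 : 0 ≤ al (0 + 1) * be (0 + 1) := mul_nonneg (cf.al_pos _).le (cf.be_nonneg _)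
    rw [abs_mul, abs_of_nonneg (by linarith : (0:ℝ) ≤ 1 + al (0 + 1) * be (0 + 1))] at s3
    have : (1 : ℝ) * 1 ≤ |(m' : ℝ)| * (1 + al (0 + 1) * be (0 + 1)) := by
      apply mul_le_mul <;> linarith
    linarith
  · have := climb' 0 m k hm hk h
    rw [hz, abs_zero, mul_zero] at this
    have : 0 < W * (1 + al 0 * be 0) := by positivity
    linarith

lemma nicf_fract {α : ℝ} (hE : ∀ i, nicfE α i = 1) (i : ℕ) :
    Int.fract (nicfT α i)⁻¹ ≤ 1 / 2 := by
  by_contra h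
  have := hE (i + 2)
  rw [nicfE, if_neg h] at this
  norm_num at this

lemma nicfT_succ' {α : ℝ} (hE : ∀ i, nicfE α i = 1) (i : ℕ) :
    nicfT α (i + 1) = Int.fract (nicfT α i)⁻¹ := by
  rw [nicfT, if_pos (nicf_fract hE i)]

lemma nicfA_succ' {α : ℝ} (hE : ∀ i, nicfE α i = 1) (i : ℕ) :
    nicfA α (i + 1) = ⌊(nicfT α i)⁻¹⌋ := by
  rw [nicfA, if_pos (nicf_fract hE i)]

lemma nicfT_props {α : ℝ} (hE : ∀ i, nicfE α i = 1) (hi : Irrational α) (h0 : 0 < α)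
    (h1 : α < 1 / 2) (i : ℕ) :
    Irrational (nicfT α i) ∧ 0 < nicfT α i ∧ nicfT α i < 1 / 2 := by
  induction i with
  | zero => exact ⟨hi, h0, h1⟩
  | succ n ih =>
    have hf := nicf_fract hE n
    have irr : Irrational (nicfT α (n + 1)) := by
      rw [nicfT_succ' hE]
      exact (irrational_inv_iff.mpr ih.1).sub_intCast _
    have ne0 : nicfT α (n + 1) ≠ 0 := irr.ne_zero
    have neh : nicfT α (n + 1) ≠ 1 / 2 := by
      have := irr.ne_rat (1 / 2 : ℚ)
      push_cast at this
      exact this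
    rw [← nicfT_succ' hE] at hf
    have hn : 0 ≤ nicfT α (n + 1) := by rw [nicfT_succ' hE]; exact Int.fract_nonneg _
    exact ⟨irr, lt_of_le_of_ne hn ne0.symm, lt_of_le_of_ne hf neh⟩

/-- backward continued fraction -/
noncomputable def bseq (A : ℕ → ℤ) : ℕ → ℝ
  | 0 => 0
  | n + 1 => 1 / (A (n + 1) + bseq A n)

lemma cfdata {α : ℝ} (hE : ∀ i, nicfE α i = 1) (hi : Irrational α) (h0 : 0 < α)
    (h1 : α < 1 / 2) : (∀ n, 2 ≤ nicfA α (n + 1)) ∧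
      CFData (nicfA α) (nicfT α) (bseq (nicfA α)) := by
  have hp := nicfT_props hE hi h0 h1
  have hA : ∀ n, 2 ≤ nicfA α (n + 1) := by
    intro n
    rw [nicfA_succ' hE]
    apply Int.le_floor.mpr
    push_cast
    rw [le_inv_comm₀ (by norm_num) (hp n).2.1]
    linarith [(hp n).2.2]
  have hA' : ∀ n, (2 : ℝ) ≤ nicfA α (n + 1) := fun n => by exact_mod_cast hA n
  have hb : ∀ n, 0 ≤ bseq (nicfA α) n := by
    intro n
    induction n with
    | zero => simp [bseq]
    | succ n ih =>
      rw [bseq]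
      have := hA' n
      positivity
  refine ⟨hA, fun n => (hp n).2.1, fun n => (hp n).2.2.le, hb, ?_, ?_, ?_, ?_⟩
  · intro n
    cases n with
    | zero => simp [bseq]
    | succ n =>
      rw [bseq]
      apply one_div_le_one_div_of_le (by norm_num)
      linarith [hA' n, hb n]
  · intro n
    rw [bseq]
    have h := hA' n
    have h' := hb n
    positivity
  · intro n
    rw [nicfA_succ' hE, nicfT_succ' hE, Int.floor_add_fract]
    exact mul_inv_cancel₀ (hp n).2.1.ne'
  · intro n
    rw [bseq]
    have h := hA' n
    have h' := hb n
    field_simp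

lemma cf_shift {a : ℕ → ℤ} {al be : ℕ → ℝ} (cf : CFData a al be) (N : ℕ) :
    CFData (fun n => a (N + n)) (fun n => al (N + n)) (fun n => be (N + n)) where
  al_pos _ := cf.al_pos _
  al_le _ := cf.al_le _
  be_nonneg _ := cf.be_nonneg _
  be_le _ := cf.be_le _
  be_pos _ := cf.be_pos _
  hal _ := cf.hal _
  hbe _ := cf.hbe _

/-- lattice data at a level -/
structure LatD (α d al be : ℝ) (q q' p p' s : ℤ) : Prop where
  hs : s = 1 ∨ s = -1
  det : q * p' - p * q' = s
  hq' : (q' : ℝ) = be * q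
  e1 : q * α - p = s * d * al
  e2 : q' * α - p' = -s * d
  dpos : 0 < d

lemma LatD.s_sq {α d al be : ℝ} {q q' p p' s : ℤ} (h : LatD α d al be q q' p p' s) :
    (s : ℝ) * s = 1 := by
  rcases h.hs with h | h <;> rw [h] <;> norm_num

lemma LatD.nrm {α d al be : ℝ} {q q' p p' s : ℤ} (h : LatD α d al be q q' p p' s) :
    q * d * (1 + al * be) = 1 := by
  have hd : (q : ℝ) * p' - p * q' = s := by exact_mod_cast h.det
  have : (s : ℝ) * (q * d * (1 + al * be)) = s := by
    linear_combination (q : ℝ) * h.e2 - q' * h.e1 + hd - s * d * al * h.hq'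
  linear_combination s * this + (1 - q * d * (1 + al * be)) * h.s_sq

lemma lat_exists {α : ℝ} {a : ℕ → ℤ} {be : ℕ → ℝ} (cf : CFData a (nicfT α) be)
    (hb0 : be 0 = 0) (ha : ∀ n, 2 ≤ a (n + 1)) (n : ℕ) :
    ∃ q q' p p' s : ℤ, LatD α (nicfD α n) (nicfT α n) (be n) q q' p p' s ∧ 2 ^ n ≤ q ∧ 0 ≤ q' := by
  induction n with
  | zero =>
    refine ⟨1, 0, 0, 1, 1, ⟨Or.inl rfl, by norm_num, by simp [hb0], by simp [nicfD, nicfT],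
      by simp [nicfD], by simp [nicfD]⟩, by norm_num, le_rfl⟩
  | succ n ih =>
    obtain ⟨q, q', p, p', s, h, hq, hq'⟩ := ih
    have hD : nicfD α (n + 1) = nicfD α n * nicfT α n := by
      rw [nicfD, Finset.prod_range_succ, nicfD]
    have hal := cf.hal n
    have hbe := cf.hbe n
    refine ⟨a (n + 1) * q + q', q, a (n + 1) * p + p', p, -s, ⟨?_, ?_, ?_, ?_, ?_, ?_⟩, ?_, ?_⟩
    · rcases h.hs with h | h <;> rw [h] <;> simp
    · linear_combination -h.det
    · push_cast
      linear_combination (-q : ℝ) * hbe - be (n + 1) * h.hq'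
    · push_cast
      rw [hD]
      linear_combination (a (n + 1) : ℝ) * h.e1 + h.e2 + s * nicfD α n * hal
    · push_cast
      rw [hD]
      linear_combination h.e1
    · rw [hD]
      exact mul_pos h.dpos (cf.al_pos n)
    · rw [pow_succ]
      nlinarith [ha n, pow_pos (two_pos : (0 : ℤ) < 2) n]
    · linarith [pow_pos (two_pos : (0 : ℤ) < 2) n]

lemma nicfD_le {α : ℝ} {a : ℕ → ℤ} {be : ℕ → ℝ} (cf : CFData a (nicfT α) be) (n : ℕ) :
    0 ≤ nicfD α n ∧ nicfD α n ≤ (1 / 2) ^ n := by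
  induction n with
  | zero => simp [nicfD]
  | succ n ih =>
    have hD : nicfD α (n + 1) = nicfD α n * nicfT α n := by
      rw [nicfD, Finset.prod_range_succ, nicfD]
    rw [hD, pow_succ]
    exact ⟨mul_nonneg ih.1 (cf.al_pos n).le,
      mul_le_mul ih.2 (cf.al_le n) (cf.al_pos n).le (by positivity)⟩

lemma exists_odd_near (u : ℝ) : ∃ m : ℤ, Odd m ∧ |u - m| ≤ 1 := by
  refine ⟨2 * ⌊u / 2⌋ + 1, ⟨_, rfl⟩, ?_⟩
  have h1 := Int.floor_le (u / 2)
  have h2 := Int.lt_floor_add_one (u / 2)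
  push_cast
  rw [abs_le]
  constructor <;> linarith

lemma lat_good {α d al be γ A δ : ℝ} {q q' p p' s : ℤ} (h : LatD α d al be q q' p p' s)
    (hq : 0 < q)
    (a0 : 0 < al) (b0 : 0 ≤ be)
    (H : ∀ n l : ℤ, |n * α - l - γ| < δ → A ≤ |(n : ℝ)| * |n * α - l - γ|) (hd : 2 * d < δ) :
    ∃ x y, |x| ≤ 1 + be ∧ |y| ≤ 1 + al ∧ GoodCell (4 * A) al be x y := by
  have ab : 0 < 1 + al * be := by positivity
  have dp := h.dpos
  obtain ⟨m0, hm0, hm⟩ := exists_odd_near (be * (-2 * s * γ / d) / (1 + al * be))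
  obtain ⟨k0, hk0, hk⟩ := exists_odd_near (-(-2 * s * γ / d) / (1 + al * be))
  have ex : (0 : ℝ) - m0 - k0 * be = (be * (-2 * s * γ / d) / (1 + al * be) - m0) +
      (-(-2 * s * γ / d) / (1 + al * be) - k0) * be := by
    field_simp; ring
  have ey : -m0 * al + k0 + (-2 * s * γ / d) = (be * (-2 * s * γ / d) / (1 + al * be) - m0) * al -
      (-(-2 * s * γ / d) / (1 + al * be) - k0) := by
    field_simp; ring
  refine ⟨0 - m0 - k0 * be, -m0 * al + k0 + (-2 * s * γ / d), ?_, ?_, ?_⟩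
  · rw [ex]
    refine (abs_add_le _ _).trans (add_le_add hm ?_)
    rw [abs_mul, abs_of_nonneg b0]
    nlinarith
  · rw [ey, sub_eq_add_neg]
    refine (abs_add_le _ _).trans ?_
    rw [abs_neg, abs_mul, abs_of_pos a0]
    nlinarith
  · intro m k hm1 hk1 hy
    obtain ⟨i, hi⟩ := hm1.sub_odd hm0
    obtain ⟨j, hj⟩ := hk1.sub_odd hk0
    have hi' : (m : ℝ) - m0 = i + i := by exact_mod_cast hi
    have hj' : (k : ℝ) - k0 = j + j := by exact_mod_cast hj
    have n1 : ((i * q + j * q' : ℤ) : ℝ) = q * (0 - m0 - k0 * be + m + k * be) / 2 := by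
      push_cast
      linear_combination (j : ℝ) * h.hq' - (q : ℝ) / 2 * hi' - be * q / 2 * hj'
    have n2 : ((i * q + j * q' : ℤ) : ℝ) * α - ((i * p + j * p' : ℤ) : ℝ) - γ =
        s * d * (-m0 * al + k0 + (-2 * s * γ / d) + m * al - k) / 2 := by
      have : s * d * (-m0 * al + k0 + (-2 * s * γ / d) + m * al - k) / 2 =
        s * d * (-m0 * al + k0 + m * al - k) / 2 - (s * s) * γ := by field_simp; ring
      rw [this, h.s_sq]
      push_cast
      linear_combination (i : ℝ) * h.e1 + j * h.e2 - s * d * al / 2 * hi' + s * d / 2 * hj'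
    have hsa : |(s : ℝ)| = 1 := by rcases h.hs with h | h <;> rw [h] <;> norm_num
    have n3 : |((i * q + j * q' : ℤ) : ℝ) * α - ((i * p + j * p' : ℤ) : ℝ) - γ| =
        d / 2 * |-m0 * al + k0 + (-2 * s * γ / d) + m * al - k| := by
      rw [n2, abs_div, abs_mul, abs_mul, hsa, abs_of_pos dp, abs_two]; ring
    have qp : (0 : ℝ) < q := by exact_mod_cast hq
    have n4 : |((i * q + j * q' : ℤ) : ℝ)| = q / 2 * |0 - m0 - k0 * be + m + k * be| := by
      rw [n1, abs_div, abs_mul, abs_of_pos qp, abs_two]; ring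
    have := H _ _ (by
      rw [n3]
      calc _ ≤ d / 2 * 4 := by gcongr
        _ < δ := by linarith)
    rw [n3, n4] at this
    have h2 := mul_le_mul_of_nonneg_right this ab.le
    have h3 := h.nrm
    set X := |0 - m0 - k0 * be + m + k * be|
    set Y := |-m0 * al + k0 + (-2 * s * γ / d) + m * al - k|
    have h4 : q / 2 * X * (d / 2 * Y) * (1 + al * be) = X * Y / 4 := by
      linear_combination X * Y / 4 * h3
    linarith

lemma ev_delta {α γ A : ℝ} (hγ : ¬∃ p q : ℤ, γ = (p : ℝ) + (q : ℝ) * α)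
    (hA : ∀ᶠ n : ℤ in Filter.cofinite, A ≤ (|n| : ℝ) * nint (n * α - γ)) :
    ∃ δ > 0, ∀ n l : ℤ, |n * α - l - γ| < δ → A ≤ |(n : ℝ)| * |n * α - l - γ| := by
  have hpos : ∀ n : ℤ, 0 < nint (n * α - γ) := by
    intro n
    rw [nint, abs_pos]
    intro h
    apply hγ
    refine ⟨-round (n * α - γ), n, ?_⟩
    push_cast
    linarith
  have hfin : {n : ℤ | ¬ (A ≤ (|n| : ℝ) * nint (n * α - γ))}.Finite := hA
  have h1 : ∀ᶠ δ : ℝ in nhdsWithin 0 (Set.Ioi 0),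
      ∀ n ∈ {n : ℤ | ¬ (A ≤ (|n| : ℝ) * nint (n * α - γ))}, δ < nint (n * α - γ) := by
    rw [Filter.eventually_all_finite hfin]
    intro n _
    exact mem_nhdsWithin_of_mem_nhds (Iio_mem_nhds (hpos n))
  obtain ⟨δ, hδ, hδ0⟩ := (h1.and self_mem_nhdsWithin).exists
  refine ⟨δ, hδ0, fun n l hl => ?_⟩
  have hr : nint (n * α - γ) ≤ |n * α - l - γ| := by
    have := round_le (n * α - γ) l
    rw [nint]
    calc _ ≤ _ := this
      _ = _ := by congr 1; ring
  by_cases hn : A ≤ (|n| : ℝ) * nint (n * α - γ)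
  · exact hn.trans (by gcongr)
  · have := hδ n hn
    linarith

lemma Mval_eq (α γ : ℝ) : Mval α γ =
    sSup {a : ℝ | ∀ᶠ n : ℤ in Filter.cofinite, a ≤ (|n| : ℝ) * nint (n * α - γ)} := by
  rw [Mval, Filter.liminf_eq]

lemma zero_mem_ev (α γ : ℝ) :
    (0 : ℝ) ∈ {a : ℝ | ∀ᶠ n : ℤ in Filter.cofinite, a ≤ (|n| : ℝ) * nint (n * α - γ)} := by
  rw [Set.mem_setOf_eq]
  refine Filter.Eventually.of_forall fun n => ?_
  rw [nint]
  positivity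

lemma Mval_le {α γ B : ℝ}
    (h : ∀ A, (∀ᶠ n : ℤ in Filter.cofinite, A ≤ (|n| : ℝ) * nint (n * α - γ)) → A ≤ B) :
    Mval α γ ≤ B := by
  rw [Mval_eq]
  exact csSup_le ⟨0, zero_mem_ev α γ⟩ h

lemma le_Mval {α γ B A : ℝ}
    (h : ∀ A, (∀ᶠ n : ℤ in Filter.cofinite, A ≤ (|n| : ℝ) * nint (n * α - γ)) → A ≤ B)
    (hA : ∀ᶠ n : ℤ in Filter.cofinite, A ≤ (|n| : ℝ) * nint (n * α - γ)) :
    A ≤ Mval α γ := by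
  rw [Mval_eq]
  exact le_csSup ⟨B, h⟩ hA

lemma upper_cells {α γ A : ℝ} {a : ℕ → ℤ} {be : ℕ → ℝ} (cf : CFData a (nicfT α) be)
    (hb0 : be 0 = 0) (ha : ∀ n, 2 ≤ a (n + 1))
    (hγ : ¬∃ p q : ℤ, γ = (p : ℝ) + (q : ℝ) * α)
    (hA : ∀ᶠ n : ℤ in Filter.cofinite, A ≤ (|n| : ℝ) * nint (n * α - γ)) :
    ∃ n0, ∀ n ≥ n0, ∃ x y, |x| ≤ 1 + be n ∧ |y| ≤ 1 + nicfT α n ∧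
      GoodCell (4 * A) (nicfT α n) (be n) x y := by
  obtain ⟨δ, hδ, H⟩ := ev_delta hγ hA
  obtain ⟨n0, hn0⟩ := exists_pow_lt_of_lt_one (half_pos hδ) (by norm_num : (1 / 2 : ℝ) < 1)
  refine ⟨n0, fun n hn => ?_⟩
  obtain ⟨q, q', p, p', s, h, hq, -⟩ := lat_exists cf hb0 ha n
  have hD := (nicfD_le cf n).2
  have hle : (1 / 2 : ℝ) ^ n ≤ (1 / 2) ^ n0 :=
    pow_le_pow_of_le_one (by norm_num) (by norm_num) hn
  exact lat_good h (lt_of_lt_of_le (by positivity) hq) (cf.al_pos n) (cf.be_nonneg n) H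
    (by linarith)

lemma crude_upper {α γ A : ℝ} {a : ℕ → ℤ} {be : ℕ → ℝ} (cf : CFData a (nicfT α) be)
    (hb0 : be 0 = 0) (ha : ∀ n, 2 ≤ a (n + 1))
    (hγ : ¬∃ p q : ℤ, γ = (p : ℝ) + (q : ℝ) * α)
    (hA : ∀ᶠ n : ℤ in Filter.cofinite, A ≤ (|n| : ℝ) * nint (n * α - γ)) : A ≤ 4 := by
  obtain ⟨n, hn⟩ := upper_cells cf hb0 ha hγ hA
  obtain ⟨x, y, hx, hy, g⟩ := hn n le_rfl
  have a0 := cf.al_pos n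
  have a1 := cf.al_le n
  have b0 := cf.be_nonneg n
  have b1 := cf.be_le n
  have hx' := abs_le.mp hx
  have hy' := abs_le.mp hy
  have v1 : |x + 1 + 1 * be n| ≤ 4 := by rw [abs_le]; constructor <;> linarith
  have v2 : |y + 1 * nicfT α n - 1| ≤ 4 := by rw [abs_le]; constructor <;> linarith
  have := g 1 1 (by decide) (by decide) (by push_cast; exact v2)
  push_cast at this
  have v3 : |x + 1 + 1 * be n| * |y + 1 * nicfT α n - 1| ≤ 4 * 4 := by gcongr
  have v4 : 0 ≤ nicfT α n * be n := mul_nonneg a0.le b0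
  by_contra hc
  nlinarith

lemma crude_val {r v A z e : ℝ} (he : e * r = 1) (hr : 1000 ≤ r) (hv : v * (A + z) = 1)
    (v0 : 0 ≤ v)
    (h1 : r - 1 ≤ A) (h2 : A ≤ r + 1) (z0 : 0 ≤ z) (z1 : z ≤ 1 / 2) :
    e - 2 * e ^ 2 ≤ v ∧ v ≤ e + 2 * e ^ 2 := by
  have e0 : 0 < e := by
    by_contra h
    nlinarith
  have e1 : e ≤ 1 / 1000 := by nlinarith
  have hp : 0 < A + z := by linarith
  constructor
  · have h3 : (e - 2 * e ^ 2) * (A + z) ≤ (e - 2 * e ^ 2) * (r + 1.5) := by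
      apply mul_le_mul_of_nonneg_left (by linarith)
      nlinarith
    have h4 : (e - 2 * e ^ 2) * (r + 1.5) ≤ 1 := by
      have : (e - 2 * e ^ 2) * (r + 1.5) = 1 - 0.5 * e - 3 * e ^ 2 := by
        linear_combination (1 - 2 * e) * he
      rw [this]; nlinarith
    exact le_of_mul_le_mul_right (by linarith) hp
  · have h3 : (e + 2 * e ^ 2) * (r - 1) ≤ (e + 2 * e ^ 2) * (A + z) := by
      apply mul_le_mul_of_nonneg_left (by linarith)
      positivity
    have h4 : 1 ≤ (e + 2 * e ^ 2) * (r - 1) := by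
      have : (e + 2 * e ^ 2) * (r - 1) = 1 + e - 2 * e ^ 2 := by
        linear_combination (1 + 2 * e) * he
      rw [this]; nlinarith
    exact le_of_mul_le_mul_right (by linarith) hp

lemma fine_val {r v z e : ℝ} (he : e * r = 1) (hr : 1000 ≤ r) (hv : v * (r + z) = 1)
    (z0 : 0 ≤ z) (z1 : z ≤ 2 * e) :
    e - 2 * e ^ 3 ≤ v ∧ v ≤ e := by
  have e0 : 0 < e := by
    by_contra h
    nlinarith
  have e1 : e ≤ 1 / 1000 := by nlinarith
  have hp : 0 < r + z := by linarith
  constructor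
  · have h3 : (e - 2 * e ^ 3) * (r + z) ≤ (e - 2 * e ^ 3) * (r + 2 * e) := by
      apply mul_le_mul_of_nonneg_left (by linarith)
      have : e ^ 3 ≤ e * (1 / 1000) := by
        calc e ^ 3 = e * (e * e) := by ring
          _ ≤ e * (1 / 1000) := by gcongr; nlinarith
      linarith
    have h4 : (e - 2 * e ^ 3) * (r + 2 * e) ≤ 1 := by
      have : (e - 2 * e ^ 3) * (r + 2 * e) = 1 - 4 * e ^ 4 := by
        linear_combination (1 - 2 * e ^ 2) * he
      rw [this]; nlinarith [pow_pos e0 4]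
    exact le_of_mul_le_mul_right (by linarith) hp
  · have h3 : 1 ≤ e * (r + z) := by nlinarith
    exact le_of_mul_le_mul_right (by linarith) hp

lemma perdata {a : ℕ → ℤ} {al be : ℕ → ℝ} (cf : CFData a al be) {r r2 : ℤ} {e : ℝ}
    (he : e * r = 1) (hr : 1000 ≤ r) (ho : Odd r) (h2 : Even r2) (hr2 : r2 = r + 1 ∨ r2 = r - 1)
    {N : ℕ} (hN : 1 ≤ N) (h : ∀ k, a (N + 5 * k) = r2 ∧ a (N + 5 * k + 1) = r ∧
      a (N + 5 * k + 2) = r ∧ a (N + 5 * k + 3) = r ∧ a (N + 5 * k + 4) = r) :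
    PerData (fun n => a (N + n)) (fun n => al (N + n)) (fun n => be (N + n)) e := by
  have hr' : (1000 : ℝ) ≤ r := by exact_mod_cast hr
  have e0 : 0 < e := by
    by_contra h
    nlinarith
  have e1 : e ≤ 1 / 1000 := by nlinarith
  have hj : ∀ k j, 1 ≤ j → j ≤ 4 → a (N + (5 * k + j)) = r := by
    intro k j h1 h4
    have := h k
    rw [← Nat.add_assoc]
    interval_cases j
    · exact this.2.1
    · exact this.2.2.1
    · exact this.2.2.2.1
    · exact this.2.2.2.2
  have hall : ∀ n, r - 1 ≤ a (N + n) ∧ a (N + n) ≤ r + 1 := by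
    intro n
    rcases Nat.eq_zero_or_pos (n % 5) with h5 | h5
    · have := (h (n / 5)).1
      rw [show N + 5 * (n / 5) = N + n by omega] at this
      omega
    · have := hj (n / 5) (n % 5) h5 (by omega)
      rw [show N + (5 * (n / 5) + n % 5) = N + n by omega] at this
      omega
  have hall' : ∀ n, (r : ℝ) - 1 ≤ a (N + n) ∧ (a (N + n) : ℝ) ≤ r + 1 := by
    intro n
    have := hall n
    exact ⟨by exact_mod_cast this.1, by exact_mod_cast this.2⟩
  have ha : ∀ n, e - 2 * e ^ 2 ≤ al (N + n) ∧ al (N + n) ≤ e + 2 * e ^ 2 := fun n =>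
    crude_val he hr' (cf.hal (N + n)) (cf.al_pos _).le (hall' (n + 1)).1 (hall' (n + 1)).2
      (cf.al_pos _).le (cf.al_le _)
  have hb : ∀ n, e - 2 * e ^ 2 ≤ be (N + n) ∧ be (N + n) ≤ e + 2 * e ^ 2 := by
    intro n
    have h1 := cf.hbe (N + n - 1)
    rw [show N + n - 1 + 1 = N + n by omega] at h1
    exact crude_val he hr' h1 (cf.be_nonneg _) (hall' n).1 (hall' n).2
      (cf.be_nonneg _) (cf.be_le _)
  have e2 : e + 2 * e ^ 2 ≤ 2 * e := by nlinarith
  refine ⟨fun n => (ha n).1, fun n => (ha n).2, fun n => (hb n).1, fun n => (hb n).2, ?_, ?_, ?_⟩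
  · intro k j h1 h3
    have c1 := cf.hal (N + (5 * k + j))
    have c2 := cf.hbe (N + (5 * k + j) - 1)
    rw [show N + (5 * k + j) - 1 + 1 = N + (5 * k + j) by omega, hj k j h1 (by omega)] at c2
    have c3 := hj k (j + 1) (by omega) (by omega)
    rw [show N + (5 * k + (j + 1)) = N + (5 * k + j) + 1 by omega] at c3
    rw [c3] at c1
    have f1 := fine_val he hr' c1 (cf.al_pos _).le ((ha (5 * k + j + 1)).2.trans e2)
    have b' := (hb (5 * k + j - 1)).2
    rw [show N + (5 * k + j - 1) = N + (5 * k + j) - 1 by omega] at b'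
    have f2 := fine_val he hr' c2 (cf.be_nonneg _) (b'.trans e2)
    exact ⟨f1.1, f1.2, f2.1, f2.2⟩
  · intro k
    show Even (a (N + 5 * k))
    rw [(h k).1]; exact h2
  · intro k j h1 h4
    show Odd (a (N + (5 * k + j)))
    rw [hj k j h1 h4]; exact ho

lemma lat_lower {α d al be W y0 e : ℝ} {q q' p p' s : ℤ} (h : LatD α d al be q q' p p' s)
    (hq : 0 < q) (hqe : 1 ≤ 3 * e ^ 2 * q) (a0 : 0 < al) (b0 : 0 ≤ be)
    (H : ∀ x0 : ℝ, -(3 * e ^ 2) ≤ x0 → x0 ≤ 0 → ∀ m k : ℤ, Odd m → Odd k →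
      (2 < |x0 + m + k * be| → W * (1 + al * be) ≤ |x0 + m + k * be| * |y0 + m * al - k|) ∧
      y0 + m * al - k ≠ 0) :
    ∃ γ : ℝ, (¬∃ p q : ℤ, γ = (p : ℝ) + (q : ℝ) * α) ∧
      ∀ n l : ℤ, q < |n| → W / 4 ≤ |(n : ℝ)| * |n * α - l - γ| := by
  have qp : (0 : ℝ) < q := by exact_mod_cast hq
  have dp := h.dpos
  have ab : 0 < 1 + al * be := by positivity
  obtain ⟨X, n0, hX, hn0⟩ : ∃ X n0 : ℤ, (X = 0 ∨ X = -1) ∧ X + q + q' = n0 + n0 := by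
    rcases Int.even_or_odd (q + q') with ⟨n, hn⟩ | ⟨n, hn⟩
    · exact ⟨0, n, Or.inl rfl, by omega⟩
    · exact ⟨-1, n, Or.inr rfl, by omega⟩
  have hn0' : (X : ℝ) + q + q' = n0 + n0 := by exact_mod_cast hn0
  have ss := h.s_sq
  have ssz : s * s = 1 := by exact_mod_cast ss
  have hx0 : -(3 * e ^ 2) ≤ (X : ℝ) / q ∧ (X : ℝ) / q ≤ 0 := by
    rcases hX with rfl | rfl
    · simp; positivity
    · push_cast
      rw [neg_div, neg_le_neg_iff, div_le_iff₀ qp]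
      exact ⟨hqe, by simp; positivity⟩
  have key : ∀ n l : ℤ, ∃ m k : ℤ, Odd m ∧ Odd k ∧
      (n : ℝ) = q * ((X : ℝ) / q + m + k * be) / 2 ∧
      n * α - l - (n0 * α - s * d * (y0 + al - 1) / 2) = s * d * (y0 + m * al - k) / 2 := by
    intro n l
    obtain ⟨i, j, hi, hj⟩ : ∃ i j : ℤ, n - n0 = i * q + j * q' ∧ l = i * p + j * p' := by
      refine ⟨s * ((n - n0) * p' - l * q'), s * (l * q - (n - n0) * p), ?_, ?_⟩
      · linear_combination -(n - n0) * ssz - s * (n - n0) * h.det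
      · linear_combination -l * ssz - s * l * h.det
    have hi' : (n : ℝ) - n0 = i * q + j * q' := by exact_mod_cast hi
    have hj' : (l : ℝ) = i * p + j * p' := by exact_mod_cast hj
    refine ⟨2 * i + 1, 2 * j + 1, ⟨_, rfl⟩, ⟨_, rfl⟩, ?_, ?_⟩
    · have : (q : ℝ) * ((X : ℝ) / q + (2 * i + 1 : ℤ) + (2 * j + 1 : ℤ) * be) / 2 =
        (X + q * (2 * i + 1) + (2 * j + 1) * (be * q)) / 2 := by
        push_cast; field_simp
      rw [this, ← h.hq']
      linear_combination hi' - hn0' / 2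
    · push_cast
      linear_combination α * hi' - hj' + i * h.e1 + j * h.e2
  have hsa : |(s : ℝ)| = 1 := by rcases h.hs with h | h <;> rw [h] <;> norm_num
  have s0 : (s : ℝ) ≠ 0 := by intro h; rw [h] at hsa; simp at hsa
  refine ⟨n0 * α - s * d * (y0 + al - 1) / 2, ?_, ?_⟩
  · rintro ⟨P, Q, hPQ⟩
    obtain ⟨m, k, hm, hk, -, e2⟩ := key Q (-P)
    have hne := (H _ hx0.1 hx0.2 m k hm hk).2
    rw [hPQ] at e2
    have : (s : ℝ) * d * (y0 + m * al - k) = 0 := by push_cast at e2; linarith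
    exact (mul_ne_zero (mul_ne_zero s0 dp.ne') hne) this
  · intro n l hn
    obtain ⟨m, k, hm, hk, e1, e2⟩ := key n l
    have hH := (H _ hx0.1 hx0.2 m k hm hk).1
    rw [e2]
    have hna : |(n : ℝ)| = q / 2 * |(X : ℝ) / q + m + k * be| := by
      conv_lhs => rw [e1]
      rw [abs_div, abs_mul, abs_of_pos qp, abs_two]; ring
    have hn' : (q : ℝ) < |(n : ℝ)| := by exact_mod_cast hn
    have h2 : 2 < |(X : ℝ) / q + m + k * be| := by
      rw [hna] at hn'
      by_contra hc
      push Not at hc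
      nlinarith
    have h3 := hH h2
    rw [hna, abs_div, abs_mul, abs_mul, hsa, abs_of_pos dp, abs_two]
    have h4 := h.nrm
    set U := |(X : ℝ) / q + m + k * be|
    set V := |y0 + m * al - k|
    have h5 : q / 2 * U * (1 * d * V / 2) * (1 + al * be) = U * V / 4 := by
      linear_combination U * V / 4 * h4
    exact le_of_mul_le_mul_right (by linarith) ab

lemma rho_le {α B : ℝ} (hB : 0 ≤ B)
    (h : ∀ γ, (¬∃ p q : ℤ, γ = (p : ℝ) + (q : ℝ) * α) →
      ∀ A, (∀ᶠ n : ℤ in Filter.cofinite, A ≤ (|n| : ℝ) * nint (n * α - γ)) → A ≤ B) :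
    rho α ≤ B := by
  apply Real.sSup_le _ hB
  rintro m ⟨γ, hγ, rfl⟩
  exact Mval_le (h γ hγ)

lemma rho_nonneg {α B : ℝ}
    (h : ∀ γ, (¬∃ p q : ℤ, γ = (p : ℝ) + (q : ℝ) * α) →
      ∀ A, (∀ᶠ n : ℤ in Filter.cofinite, A ≤ (|n| : ℝ) * nint (n * α - γ)) → A ≤ B) :
    0 ≤ rho α := by
  apply Real.sSup_nonneg
  rintro m ⟨γ, hγ, rfl⟩
  exact le_Mval (h γ hγ) (zero_mem_ev α γ)

lemma le_rho {α B A γ : ℝ}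
    (h : ∀ γ, (¬∃ p q : ℤ, γ = (p : ℝ) + (q : ℝ) * α) →
      ∀ A, (∀ᶠ n : ℤ in Filter.cofinite, A ≤ (|n| : ℝ) * nint (n * α - γ)) → A ≤ B)
    (hγ : ¬∃ p q : ℤ, γ = (p : ℝ) + (q : ℝ) * α)
    (hA : ∀ᶠ n : ℤ in Filter.cofinite, A ≤ (|n| : ℝ) * nint (n * α - γ)) :
    A ≤ rho α := by
  refine (le_Mval (h γ hγ) hA).trans (le_csSup ⟨B, ?_⟩ ⟨γ, hγ, rfl⟩)
  rintro m ⟨γ', hγ', rfl⟩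
  exact Mval_le (h γ' hγ')

theorem main_core {α : ℝ} (hi : Irrational α) (h0 : 0 < α) (h1 : α < 1 / 2)
    (hE : ∀ i, nicfE α i = 1) {r r2 : ℤ} (hr3 : 3 ≤ r) (ho : Odd r) (h2 : Even r2)
    (hr2 : r2 = r + 1 ∨ r2 = r - 1) {i0 : ℕ} (hi0 : 1 ≤ i0)
    (h : ∀ k, nicfA α (i0 + 5 * k) = r2 ∧ nicfA α (i0 + 5 * k + 1) = r ∧
      nicfA α (i0 + 5 * k + 2) = r ∧ nicfA α (i0 + 5 * k + 3) = r ∧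
      nicfA α (i0 + 5 * k + 4) = r) :
    |rho α - 1 / 4 * (1 - 2 / (r : ℝ) - 2 / (r : ℝ) ^ 2)| ≤ 10 ^ 10 / (r : ℝ) ^ 3 := by
  obtain ⟨hA2, cf⟩ := cfdata hE hi h0 h1
  have hb0 : bseq (nicfA α) 0 = 0 := rfl
  have crude : ∀ γ, (¬∃ p q : ℤ, γ = (p : ℝ) + (q : ℝ) * α) →
      ∀ A, (∀ᶠ n : ℤ in Filter.cofinite, A ≤ (|n| : ℝ) * nint (n * α - γ)) → A ≤ 4 :=
    fun γ hγ A hA => crude_upper cf hb0 hA2 hγ hA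
  have hr3' : (3 : ℝ) ≤ r := by exact_mod_cast hr3
  have rp : (0 : ℝ) < r := by linarith
  obtain ⟨e, hee⟩ : ∃ e : ℝ, e = 1 / r := ⟨_, rfl⟩
  have he : e * r = 1 := by rw [hee]; field_simp
  have e0 : 0 < e := by rw [hee]; positivity
  have e13 : e ≤ 1 / 3 := by nlinarith
  have g1 : 1 / 4 * (1 - 2 / (r : ℝ) - 2 / (r : ℝ) ^ 2) = 1 / 4 * (1 - 2 * e - 2 * e ^ 2) := by
    rw [hee]; field_simp
  have g2 : 10 ^ 10 / (r : ℝ) ^ 3 = 10 ^ 10 * e ^ 3 := by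
    rw [hee]; field_simp
  rw [g1, g2]
  have ros := rho_nonneg crude
  have ro4 := rho_le (by norm_num) crude
  rcases lt_or_ge r 1000 with hlt | hge
  · have hlt' : (r : ℝ) < 1000 := by exact_mod_cast hlt
    have el : 1 / 1000 ≤ e := by nlinarith
    have e3 : (1 / 1000 : ℝ) ^ 3 ≤ e ^ 3 := by gcongr
    have e2 : e ^ 2 ≤ 1 / 9 := by nlinarith
    have e2' : 0 < e ^ 2 := by positivity
    norm_num at e3
    rw [abs_le]
    constructor <;> linarith
  · have hge' : (1000 : ℝ) ≤ r := by exact_mod_cast hge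
    have el : e ≤ 1 / 1000 := by nlinarith
    have e2 : e ^ 2 ≤ e / 1000 := by nlinarith
    have e3 : 0 < e ^ 3 := by positivity
    have hK : ∀ K : ℕ, PerData (fun n => nicfA α (i0 + 5 * K + n))
        (fun n => nicfT α (i0 + 5 * K + n)) (fun n => bseq (nicfA α) (i0 + 5 * K + n)) e := by
      intro K
      apply perdata cf he hge ho h2 hr2 (by omega)
      intro k
      have := h (K + k)
      rw [show i0 + 5 * (K + k) = i0 + 5 * K + 5 * k by ring] at this
      exact this
    have up : rho α ≤ 1 / 4 * (1 - 2 * e - 2 * e ^ 2 + 100 * e ^ 3) := by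
      apply rho_le (by nlinarith)
      intro γ hγ A hA
      obtain ⟨n0, hn0⟩ := upper_cells cf hb0 hA2 hγ hA
      obtain ⟨x, y, hx, hy, g⟩ := hn0 (i0 + 5 * n0 + 3) (by omega)
      have p := hK n0
      have b2 := p.b2 3
      have a2 := p.a2 3
      have := upper_abs (cf_shift cf (i0 + 5 * n0)) p e0 el (x := x) (y := y) (W := 4 * A)
        (by linarith) (by linarith) g
      linarith
    have lo : 1 / 4 * (1 - 2 * e - 2 * e ^ 2 - 50 * e ^ 3) ≤ rho α := by
      obtain ⟨K, hKq⟩ := pow_unbounded_of_one_lt ((r : ℝ) ^ 2) (one_lt_two : (1 : ℝ) < 2)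
      have e3' : e ^ 3 ≤ e ^ 2 := by nlinarith [sq_nonneg e]
      obtain ⟨y0, hy0⟩ := lower_abs (cf_shift cf (i0 + 5 * K)) (hK K) e0 el
        (W := 1 - 2 * e - 2 * e ^ 2 - 50 * e ^ 3) le_rfl (by nlinarith)
      obtain ⟨q, q', p, p', s, hL, hq, -⟩ := lat_exists cf hb0 hA2 (i0 + 5 * K)
      have hq2 : (r : ℝ) ^ 2 ≤ q := by
        have t1 : (2 : ℝ) ^ (i0 + 5 * K) ≤ q := by exact_mod_cast hq
        have t2 : (2 : ℝ) ^ K ≤ 2 ^ (i0 + 5 * K) :=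
          pow_le_pow_right₀ (by norm_num) (by omega)
        linarith
      have hqp : 0 < q := lt_of_lt_of_le (by positivity) hq
      have hqe : 1 ≤ 3 * e ^ 2 * q := by
        have t1 : e ^ 2 * (r : ℝ) ^ 2 ≤ e ^ 2 * q := by gcongr
        have t2 : e ^ 2 * (r : ℝ) ^ 2 = 1 := by rw [← mul_pow, he, one_pow]
        linarith
      obtain ⟨γ, hγ, hlow⟩ := lat_lower hL hqp hqe (cf.al_pos _) (cf.be_nonneg _) hy0
      refine le_rho crude hγ ?_
      have hfin : (Set.Icc (-q) q).Finite := Set.finite_Icc _ _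
      filter_upwards [hfin.compl_mem_cofinite] with n hn
      have hn' : q < |n| := by
        by_contra hc
        push Not at hc
        exact hn ⟨(abs_le.mp hc).1, (abs_le.mp hc).2⟩
      have := hlow n (round (n * α - γ)) hn'
      rw [nint, show (n : ℝ) * α - γ - round (n * α - γ) = n * α - round (n * α - γ) - γ by ring]
      linarith
    rw [abs_le]
    constructor <;> linarith

/-- Theorem 6: the asymptotic value of `ρ(α)` for `α` with regular continued fraction
expansion of eventual period `R_**, R_*, R_*, R_*, R_*`. -/
theorem stmt6 :
    ∃ C : ℝ, 0 < C ∧ ∀ R : ℕ, 2 ≤ R → ∀ α : ℝ, Irrational α → 0 < α → α < 1 / 2 →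
      (∀ i, nicfE α i = 1) →
      (∃ i0 : ℕ, 1 ≤ i0 ∧ ∀ k : ℕ,
        nicfA α (i0 + 5 * k) = (if Even R then (R : ℤ) else (R : ℤ) + 1) ∧
        nicfA α (i0 + 5 * k + 1) = (if Odd R then (R : ℤ) else (R : ℤ) + 1) ∧
        nicfA α (i0 + 5 * k + 2) = (if Odd R then (R : ℤ) else (R : ℤ) + 1) ∧
        nicfA α (i0 + 5 * k + 3) = (if Odd R then (R : ℤ) else (R : ℤ) + 1) ∧
        nicfA α (i0 + 5 * k + 4) = (if Odd R then (R : ℤ) else (R : ℤ) + 1)) →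
      |rho α - 1 / 4 * (1 - 2 / (if Odd R then (R : ℝ) else (R : ℝ) + 1) -
          2 / (if Odd R then (R : ℝ) else (R : ℝ) + 1) ^ 2)| ≤
        C / (if Odd R then (R : ℝ) else (R : ℝ) + 1) ^ 3 := by
  refine ⟨10 ^ 10, by norm_num, ?_⟩
  intro R hR α hi h0 h1 hE ⟨i0, hi0, h⟩
  rcases Nat.even_or_odd R with hev | hod
  · have hno : ¬ Odd R := Nat.not_odd_iff_even.mpr hev
    simp only [if_pos hev, if_neg hno] at h ⊢
    have hevz : Even (R : ℤ) := by exact_mod_cast hev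
    have := main_core hi h0 h1 hE (r := (R : ℤ) + 1) (r2 := R) (by omega) hevz.add_one hevz
      (Or.inr (by ring)) hi0 h
    push_cast at this
    exact this
  · have hne : ¬ Even R := Nat.not_even_iff_odd.mpr hod
    simp only [if_pos hod, if_neg hne] at h ⊢
    have hodz : Odd (R : ℤ) := by exact_mod_cast hod
    have h3 : 3 ≤ R := by
      rcases hod with ⟨t, ht⟩
      omega
    have := main_core hi h0 h1 hE (r := (R : ℤ)) (r2 := (R : ℤ) + 1) (by omega) hodz hodz.add_one
      (Or.inl rfl) hi0 h
    push_cast at this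
    exact this
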